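/- arXiv:1011.1785 — 2 statements merged into one kernel-verified Lean document; each statement's English description precedes it below -/
import Mathlib

section
/- Let g ∈ C¹((a,b), ℝ) with a < 0 < b, g(x) = x + o(x) as x → 0, and x·g(x) > 0 for x ≠ 0, and let f₁, f₃, …, f_{2N+1} : (a,b) → ℝ be continuously differentiable, with all even-index coefficients f_{2k} ≡ 0. Set G(x) = ∫₀^x g(s) ds. Assume that for every k = 0, …, N condition (H_g^{2k+1}) holds: for all x ≠ 0, x·[ (2k+1)·f_{2k+1}(x)·g(x) + 2G(x)·(f_{2k+1}'(x)·g(x) − f_{2k+1}(x)·g'(x))/g(x) ] ≥ 0. Assume further that there exists a sequence x_m → 0 such that for every m there exists k(m) for which the inequality (H_g^{2k(m)+1}) is strict at x_m (the left-hand side is nonzero). Then the system ẋ = y, ẏ = −g(x) − Σ_{k=0}^{N} f_{2k+1}(x)·y^{2k+1} has at most one limit cycle in the region (a,b) × ℝ, and if such a limit cycle exists it is hyperbolic. -/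
open Set Filter Metric Real Topology intervalIntegral

noncomputable section

/-- `γ` solves the planar ODE with vector field `F` at every time in `s`. -/
def IsSolOn (F : ℝ × ℝ → ℝ × ℝ) (γ : ℝ → ℝ × ℝ) (s : Set ℝ) : Prop :=
  ∀ t ∈ s, HasDerivAt γ (F (γ t)) t

/-- A cycle: a non-constant `T`-periodic solution (with `T > 0`). -/
def IsCycle (F : ℝ × ℝ → ℝ × ℝ) (γ : ℝ → ℝ × ℝ) (T : ℝ) : Prop :=
  (∀ t, HasDerivAt γ (F (γ t)) t) ∧ 0 < T ∧ (∀ t, γ (t + T) = γ t) ∧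
    ∃ t₁ t₂, γ t₁ ≠ γ t₂

/-- A limit cycle: a cycle whose orbit has a neighbourhood containing no orbit
of any other cycle. -/
def IsLimitCycle (F : ℝ × ℝ → ℝ × ℝ) (γ : ℝ → ℝ × ℝ) (T : ℝ) : Prop :=
  IsCycle F γ T ∧
    ∃ U : Set (ℝ × ℝ), IsOpen U ∧ range γ ⊆ U ∧
      ∀ (γ' : ℝ → ℝ × ℝ) (T' : ℝ), IsCycle F γ' T' →
        range γ' ≠ range γ → ¬ range γ' ⊆ U

/-- There is a non-trivial positive semi-orbit of the system contained in `Z`. -/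
def HasSemiOrbitIn (F : ℝ × ℝ → ℝ × ℝ) (Z : Set (ℝ × ℝ)) : Prop :=
  ∃ (γ : ℝ → ℝ × ℝ) (t₀ : ℝ), IsSolOn F γ (Ici t₀) ∧
    (∃ t₁ ∈ Ici t₀, ∃ t₂ ∈ Ici t₀, γ t₁ ≠ γ t₂) ∧ γ '' Ici t₀ ⊆ Z

/-- There is a non-trivial (full) orbit of the system contained in `Z`. -/
def HasOrbitIn (F : ℝ × ℝ → ℝ × ℝ) (Z : Set (ℝ × ℝ)) : Prop :=
  ∃ γ : ℝ → ℝ × ℝ, (∀ t, HasDerivAt γ (F (γ t)) t) ∧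
    (∃ t₁ t₂, γ t₁ ≠ γ t₂) ∧ range γ ⊆ Z

/-- The vector field of system (S): ẋ = y, ẏ = −x − y·φ(x,y). -/
def phiVF (φ : ℝ × ℝ → ℝ) : ℝ × ℝ → ℝ × ℝ :=
  fun p => (p.2, -p.1 - p.2 * φ p)

/-- `G(x) = ∫₀ˣ g(s) ds`. -/
def Gfun (g : ℝ → ℝ) (x : ℝ) : ℝ := ∫ s in (0:ℝ)..x, g s

/-- The vector field of ẋ = y, ẏ = −g(x) − Σ_{k=0}^{N} f_{2k+1}(x) y^{2k+1},
where `o k` stands for `f_{2k+1}`. -/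
def gOddVF (g : ℝ → ℝ) (N : ℕ) (o : ℕ → ℝ → ℝ) : ℝ × ℝ → ℝ × ℝ :=
  fun p => (p.2, -g p.1 - ∑ k ∈ Finset.range (N + 1), o k p.1 * p.2 ^ (2 * k + 1))

/-- The divergence of `gOddVF g N o`. -/
def gOddDiv (N : ℕ) (o : ℕ → ℝ → ℝ) : ℝ × ℝ → ℝ :=
  fun p => -∑ k ∈ Finset.range (N + 1), (2 * (k : ℝ) + 1) * o k p.1 * p.2 ^ (2 * k)

/-- The left-hand side of condition (H_g^{2k+1}) for a coefficient `f`. -/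
def HgLHS (g : ℝ → ℝ) (k : ℕ) (f : ℝ → ℝ) (x : ℝ) : ℝ :=
  x * ((2 * (k : ℝ) + 1) * f x * g x
    + 2 * Gfun g x * (deriv f x * g x - f x * deriv g x) / g x)


/-- Coefficient of `y^{2k+2}` in the Lie-bracket expression. -/
def Bfun (o o' : ℕ → ℝ → ℝ) (U p A' : ℝ → ℝ) (k : ℕ) (x : ℝ) : ℝ :=
  U x / p x * o' k x + (2 * (k:ℝ) + 1) * o k x - (2 - A' x) * o k x

/-- The analytic data extracted from the hypotheses. -/
structure Good (a b : ℝ) (g : ℝ → ℝ) (N : ℕ) (o : ℕ → ℝ → ℝ) (U p A' g' : ℝ → ℝ)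
    (o' : ℕ → ℝ → ℝ) : Prop where
  ha : a < 0
  hb : 0 < b
  hU : ∀ x ∈ Ioo a b, HasDerivAt U (p x) x
  hp : ContinuousOn p (Ioo a b)
  ppos : ∀ x ∈ Ioo a b, 0 < p x
  U0 : U 0 = 0
  p0 : p 0 = 1
  A0 : A' 0 = 1
  hgU : ∀ x ∈ Ioo a b, g x = p x * U x
  hA : ∀ x ∈ Ioo a b, HasDerivAt (fun x => U x / p x) (A' x) x
  hg : ∀ x ∈ Ioo a b, HasDerivAt g (g' x) x
  ho : ∀ k ∈ Finset.range (N+1), ∀ x ∈ Ioo a b, HasDerivAt (o k) (o' k x) x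
  hAg : ∀ x ∈ Ioo a b, U x / p x * g' x = (2 - A' x) * g x
  hB : ∀ k ∈ Finset.range (N+1), ∀ x ∈ Ioo a b, x ≠ 0 → 0 ≤ Bfun o o' U p A' k x
  hs : ∃ xs : ℕ → ℝ, (∀ m, xs m ∈ Ioo a b ∧ xs m ≠ 0) ∧ Tendsto xs atTop (𝓝 0) ∧
      ∀ m, ∃ k ∈ Finset.range (N + 1), Bfun o o' U p A' k (xs m) ≠ 0

theorem good_exists (a b : ℝ) (ha : a < 0) (hb : 0 < b)
    (g : ℝ → ℝ) (hg : ContDiffOn ℝ 1 g (Ioo a b))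
    (hglin : Asymptotics.IsLittleO (𝓝 (0:ℝ)) (fun x => g x - x) (fun x : ℝ => x))
    (hgsign : ∀ x ∈ Ioo a b, x ≠ 0 → 0 < x * g x)
    (N : ℕ) (o : ℕ → ℝ → ℝ)
    (ho : ∀ k ∈ Finset.range (N + 1), ContDiffOn ℝ 1 (o k) (Ioo a b))
    (hHg : ∀ k ∈ Finset.range (N + 1), ∀ x ∈ Ioo a b, x ≠ 0 →
      0 ≤ HgLHS g k (o k) x)
    (hseq : ∃ xs : ℕ → ℝ, (∀ m, xs m ∈ Ioo a b) ∧ Tendsto xs atTop (𝓝 0) ∧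
      ∀ m, ∃ k ∈ Finset.range (N + 1), HgLHS g k (o k) (xs m) ≠ 0) :
    ∃ U p A' g' o', Good a b g N o U p A' g' o' := by
  have h0 : (0:ℝ) ∈ Ioo a b := ⟨ha, hb⟩
  have hnh : ∀ x ∈ Ioo a b, Ioo a b ∈ 𝓝 x := fun x hx => isOpen_Ioo.mem_nhds hx
  have hgd : ∀ x ∈ Ioo a b, HasDerivAt g (deriv g x) x := fun x hx =>
    ((hg.differentiableOn one_ne_zero).differentiableAt (hnh x hx)).hasDerivAt
  have hod : ∀ k ∈ Finset.range (N+1), ∀ x ∈ Ioo a b, HasDerivAt (o k) (deriv (o k) x) x :=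
    fun k hk x hx =>
    (((ho k hk).differentiableOn one_ne_zero).differentiableAt (hnh x hx)).hasDerivAt
  have hg0 : g 0 = 0 := by
    have h1 := (hglin.def one_pos).self_of_nhds
    simpa using h1
  have hgc : ContinuousOn g (Ioo a b) := hg.continuousOn
  have hGd : ∀ x ∈ Ioo a b, HasDerivAt (Gfun g) (g x) x := by
    intro x hx
    have hsub : uIcc 0 x ⊆ Ioo a b := by
      have : OrdConnected (Ioo a b) := ordConnected_Ioo
      exact this.uIcc_subset h0 hx
    exact integral_hasDerivAt_right ((hgc.mono hsub).intervalIntegrable)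
      (hgc.stronglyMeasurableAtFilter isOpen_Ioo x hx) (hgc.continuousAt (hnh x hx))
  have hG0 : Gfun g 0 = 0 := by simp [Gfun]
  have hgd0 : HasDerivAt g 1 0 := by
    rw [hasDerivAt_iff_isLittleO]
    simpa [hg0] using hglin
  have hgx : Tendsto (fun x => g x / x) (𝓝[≠] 0) (𝓝 1) := by
    have := hasDerivAt_iff_tendsto_slope.1 hgd0
    refine this.congr fun x => ?_
    simp [slope_def_field, hg0]
  have hGx : Tendsto (fun x => Gfun g x / x ^ 2) (𝓝[≠] 0) (𝓝 (1/2)) := by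
    apply HasDerivAt.lhopital_zero_nhdsNE (f' := g) (g' := fun x => 2 * x)
    · exact mem_nhdsWithin_of_mem_nhds (by filter_upwards [hnh 0 h0] using hGd)
    · refine Eventually.of_forall fun x => ?_
      simpa using hasDerivAt_pow 2 x
    · filter_upwards [self_mem_nhdsWithin] with x hx
      simpa using hx
    · have := (hGd 0 h0).continuousAt.tendsto
      rw [hG0] at this
      exact this.mono_left nhdsWithin_le_nhds
    · have : Tendsto (fun x : ℝ => x ^ 2) (𝓝 0) (𝓝 (0 ^ 2)) := (continuous_pow 2).tendsto 0
      simp only [ne_eq, OfNat.ofNat_ne_zero, not_false_eq_true, zero_pow] at this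
      exact this.mono_left nhdsWithin_le_nhds
    · refine (hgx.const_mul (1/2)).congr' ?_ |>.trans (by simp)
      filter_upwards [self_mem_nhdsWithin] with x hx
      have : x ≠ 0 := hx
      field_simp
  have hGpos : ∀ x ∈ Ioo a b, x ≠ 0 → 0 < Gfun g x := by
    intro x hx hx0
    rcases lt_or_gt_of_ne hx0 with h | h
    · have : StrictAntiOn (Gfun g) (Ioc a 0) := by
        apply strictAntiOn_of_deriv_neg (convex_Ioc a 0)
        · exact fun y hy => (hGd y ⟨hy.1, hy.2.trans_lt hb⟩).continuousAt.continuousWithinAt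
        · intro y hy
          rw [interior_Ioc] at hy
          have hy' : y ∈ Ioo a b := ⟨hy.1, hy.2.trans hb⟩
          rw [(hGd y hy').deriv]
          exact (neg_iff_neg_of_mul_pos (hgsign y hy' hy.2.ne)).1 hy.2
      simpa [hG0] using this ⟨hx.1, h.le⟩ ⟨ha, le_rfl⟩ h
    · have : StrictMonoOn (Gfun g) (Ico 0 b) := by
        apply strictMonoOn_of_deriv_pos (convex_Ico 0 b)
        · exact fun y hy => (hGd y ⟨ha.trans_le hy.1, hy.2⟩).continuousAt.continuousWithinAt
        · intro y hy
          rw [interior_Ico] at hy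
          have hy' : y ∈ Ioo a b := ⟨ha.trans hy.1, hy.2⟩
          rw [(hGd y hy').deriv]
          exact (pos_iff_pos_of_mul_pos (hgsign y hy' hy.1.ne')).1 hy.1
      simpa [hG0] using this ⟨le_rfl, hb⟩ ⟨h.le, hx.2⟩ h
  have hGnn : ∀ x ∈ Ioo a b, 0 ≤ 2 * Gfun g x := by
    intro x hx
    by_cases h : x = 0
    · simp [h, hG0]
    · linarith [hGpos x hx h]
  set U : ℝ → ℝ := fun x => if 0 ≤ x then √(2 * Gfun g x) else -√(2 * Gfun g x) with hUdef
  have hU0 : U 0 = 0 := by simp [hUdef, hG0]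
  have hUsq : ∀ x ∈ Ioo a b, U x ^ 2 = 2 * Gfun g x := by
    intro x hx
    simp only [hUdef]
    split_ifs
    · exact Real.sq_sqrt (hGnn x hx)
    · rw [neg_sq]; exact Real.sq_sqrt (hGnn x hx)
  have hUx : ∀ x ∈ Ioo a b, x ≠ 0 → 0 < x * U x := by
    intro x hx hx0
    have hs : 0 < √(2 * Gfun g x) := Real.sqrt_pos.2 (by linarith [hGpos x hx hx0])
    simp only [hUdef]
    split_ifs with h
    · exact mul_pos (lt_of_le_of_ne h (Ne.symm hx0)) hs
    · exact mul_pos_of_neg_of_neg (not_le.1 h) (by linarith)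
  have hUlim : Tendsto (fun x => U x / x) (𝓝[≠] 0) (𝓝 1) := by
    have h1 : Tendsto (fun x => √(2 * (Gfun g x / x ^ 2))) (𝓝[≠] 0) (𝓝 (√(2 * (1/2)))) :=
      (Real.continuous_sqrt.tendsto _).comp (hGx.const_mul 2)
    rw [show (2:ℝ) * (1/2) = 1 by norm_num, Real.sqrt_one] at h1
    refine h1.congr' ?_
    filter_upwards [self_mem_nhdsWithin, mem_nhdsWithin_of_mem_nhds (hnh 0 h0)] with x hx hx'
    have hx0 : x ≠ 0 := hx
    have h2 : 0 ≤ U x / x := by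
      have := hUx x hx' hx0
      have h3 : U x / x = x * U x / x ^ 2 := by field_simp
      rw [h3]; positivity
    rw [← Real.sqrt_sq h2, div_pow, hUsq x hx', mul_div_assoc]
  set p : ℝ → ℝ := fun x => if x = 0 then 1 else g x / U x with hpdef
  have hpne : ∀ x, x ≠ 0 → p x = g x / U x := fun x hx => by simp [hpdef, hx]
  have hp0 : p 0 = 1 := by simp [hpdef]
  have hUne : ∀ x ∈ Ioo a b, x ≠ 0 → U x ≠ 0 := fun x hx hx0 h => by
    have := hUx x hx hx0; simp [h] at this
  have hgne : ∀ x ∈ Ioo a b, x ≠ 0 → g x ≠ 0 := fun x hx hx0 h => by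
    have := hgsign x hx hx0; simp [h] at this
  have hUd0 : HasDerivAt U 1 0 := by
    rw [hasDerivAt_iff_tendsto_slope]
    refine hUlim.congr fun x => ?_
    simp [slope_def_field, hU0]
  have hUd : ∀ x ∈ Ioo a b, HasDerivAt U (p x) x := by
    intro x hx
    by_cases hx0 : x = 0
    · rw [hx0, hp0]; exact hUd0
    have hd : HasDerivAt (fun x => √(2 * Gfun g x)) (2 * g x / (2 * √(2 * Gfun g x))) x :=
      ((hGd x hx).const_mul 2).sqrt (by have := hGpos x hx hx0; positivity)
    rw [hpne x hx0]
    rcases lt_or_gt_of_ne hx0 with h | h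
    · have e : U =ᶠ[𝓝 x] fun x => -√(2 * Gfun g x) := by
        filter_upwards [Iio_mem_nhds h] with y hy
        have hy' : ¬ (0 ≤ y) := not_le.2 hy
        simp only [hUdef, if_neg hy']
      refine (hd.neg.congr_of_eventuallyEq e).congr_deriv ?_
      rw [e.eq_of_nhds, mul_div_mul_left _ _ two_ne_zero, div_neg]
    · have e : U =ᶠ[𝓝 x] fun x => √(2 * Gfun g x) := by
        filter_upwards [Ioi_mem_nhds h] with y hy
        have hy' : 0 ≤ y := le_of_lt hy
        simp only [hUdef, if_pos hy']
      refine (hd.congr_of_eventuallyEq e).congr_deriv ?_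
      rw [e.eq_of_nhds, mul_div_mul_left _ _ two_ne_zero]
  have hplim : Tendsto p (𝓝[≠] 0) (𝓝 1) := by
    have := hgx.div hUlim one_ne_zero
    rw [div_one] at this
    refine this.congr' ?_
    filter_upwards [self_mem_nhdsWithin] with x hx
    have hx0 : x ≠ 0 := hx
    simp only [Pi.div_apply]
    rw [hpne x hx0, div_div_div_cancel_right₀ hx0]
  have hpc : ContinuousOn p (Ioo a b) := by
    intro x hx
    apply ContinuousAt.continuousWithinAt
    by_cases hx0 : x = 0
    · rw [hx0, continuousAt_iff_punctured_nhds, hp0]; exact hplim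
    · have e : p =ᶠ[𝓝 x] fun x => g x / U x := by
        filter_upwards [isOpen_ne.mem_nhds hx0] with y hy
        exact hpne y hy
      exact ((hgd x hx).continuousAt.div (hUd x hx).continuousAt (hUne x hx hx0)).congr e.symm
  have hppos : ∀ x ∈ Ioo a b, 0 < p x := by
    intro x hx
    by_cases hx0 : x = 0
    · rw [hx0, hp0]; exact one_pos
    · rw [hpne x hx0]
      have h1 := hgsign x hx hx0
      have h2 := hUx x hx hx0
      have : g x / U x = (x * g x) / (x * U x) := by rw [mul_div_mul_left _ _ hx0]
      rw [this]; positivity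
  have hA : ∀ x ∈ Ioo a b, x ≠ 0 → U x / p x = 2 * Gfun g x / g x := by
    intro x hx hx0
    rw [hpne x hx0, div_div_eq_mul_div, ← pow_two, hUsq x hx]
  have hBH : ∀ k, ∀ x ∈ Ioo a b, x ≠ 0 → Bfun o (fun k => deriv (o k)) U p
      (fun x => if x = 0 then 1 else 2 - 2 * Gfun g x * deriv g x / g x ^ 2) k x
      = HgLHS g k (o k) x / (x * g x) := by
    intro k x hx hx0
    have := hgne x hx hx0
    simp only [Bfun, HgLHS, hA x hx hx0, if_neg hx0]
    field_simp
    ring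
  refine ⟨U, p, fun x => if x = 0 then 1 else 2 - 2 * Gfun g x * deriv g x / g x ^ 2,
    deriv g, fun k => deriv (o k), ha, hb, hUd, hpc, hppos, hU0, hp0, by simp, ?_, ?_, hgd, hod,
    ?_, ?_, ?_⟩
  · intro x hx
    by_cases hx0 : x = 0
    · simp [hx0, hg0, hU0]
    · rw [hpne x hx0, div_mul_cancel₀ _ (hUne x hx hx0)]
  · intro x hx
    by_cases hx0 : x = 0
    · subst hx0
      simp only [if_true]
      rw [hasDerivAt_iff_tendsto_slope]
      have := hUlim.div hplim one_ne_zero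
      rw [div_one] at this
      refine this.congr fun x => ?_
      simp only [Pi.div_apply, slope_def_field, hU0, zero_div, sub_zero]
      rw [div_right_comm]
    · have e : (fun x => U x / p x) =ᶠ[𝓝 x] fun x => 2 * Gfun g x / g x := by
        filter_upwards [isOpen_ne.mem_nhds hx0, hnh x hx] with y hy hy'
        exact hA y hy' hy
      have := hgne x hx hx0
      refine ((((hGd x hx).const_mul 2).div (hgd x hx) this).congr_of_eventuallyEq e).congr_deriv ?_
      simp only [if_neg hx0]
      field_simp
  · intro x hx
    by_cases hx0 : x = 0
    · simp [hx0, hg0, hU0]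
    · have := hgne x hx hx0
      simp only [if_neg hx0, hA x hx hx0]
      field_simp
      ring
  · intro k hk x hx hx0
    rw [hBH k x hx hx0]
    exact div_nonneg (hHg k hk x hx hx0) (hgsign x hx hx0).le
  · obtain ⟨xs, h1, h2, h3⟩ := hseq
    have hne : ∀ m, xs m ≠ 0 := by
      intro m h
      obtain ⟨k, -, hk⟩ := h3 m
      apply hk
      simp [HgLHS, h]
    refine ⟨xs, fun m => ⟨h1 m, hne m⟩, h2, fun m => ?_⟩
    obtain ⟨k, hk, hk'⟩ := h3 m
    refine ⟨k, hk, ?_⟩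
    rw [hBH k _ (h1 m) (hne m)]
    exact div_ne_zero hk' (hgsign _ (h1 m) (hne m)).ne'

/-- `h_k U^{2k}`. -/
def Mfun (o : ℕ → ℝ → ℝ) (U p : ℝ → ℝ) (k : ℕ) (x : ℝ) : ℝ := o k x / p x * U x ^ (2 * k)

/-- The friction coefficient in the new coordinates. -/
def phi (N : ℕ) (o : ℕ → ℝ → ℝ) (p : ℝ → ℝ) (x y : ℝ) : ℝ :=
  ∑ k ∈ Finset.range (N+1), o k x / p x * y ^ (2 * k)

namespace Good
variable {a b : ℝ} {g : ℝ → ℝ} {N : ℕ} {o : ℕ → ℝ → ℝ} {U p A' g' : ℝ → ℝ} {o' : ℕ → ℝ → ℝ}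

theorem Umono (H : Good a b g N o U p A' g' o') : StrictMonoOn U (Ioo a b) := by
  apply strictMonoOn_of_deriv_pos (convex_Ioo a b)
  · exact fun x hx => (H.hU x hx).continuousAt.continuousWithinAt
  · intro x hx
    rw [interior_Ioo] at hx
    rw [(H.hU x hx).deriv]
    exact H.ppos x hx

theorem mem0 (H : Good a b g N o U p A' g' o') : (0:ℝ) ∈ Ioo a b := ⟨H.ha, H.hb⟩

theorem Upos (H : Good a b g N o U p A' g' o') {x : ℝ} (hx : x ∈ Ioo a b) : 0 < U x ↔ 0 < x := by
  have := H.Umono.lt_iff_lt H.mem0 hx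
  rwa [H.U0] at this

theorem Uneg (H : Good a b g N o U p A' g' o') {x : ℝ} (hx : x ∈ Ioo a b) : U x < 0 ↔ x < 0 := by
  have := H.Umono.lt_iff_lt hx H.mem0
  rwa [H.U0] at this

theorem Uzero (H : Good a b g N o U p A' g' o') {x : ℝ} (hx : x ∈ Ioo a b) : U x = 0 ↔ x = 0 := by
  have := H.Umono.injOn.eq_iff hx H.mem0
  rwa [H.U0] at this

theorem Mcont (H : Good a b g N o U p A' g' o') {k : ℕ} (hk : k ∈ Finset.range (N+1)) :
    ContinuousOn (Mfun o U p k) (Ioo a b) := by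
  have h1 : ContinuousOn (o k) (Ioo a b) :=
    fun x hx => (H.ho k hk x hx).continuousAt.continuousWithinAt
  have h2 : ContinuousOn U (Ioo a b) :=
    fun x hx => (H.hU x hx).continuousAt.continuousWithinAt
  exact (h1.div H.hp (fun x hx => (H.ppos x hx).ne')).mul (h2.pow _)

theorem Mderiv (H : Good a b g N o U p A' g' o') {k : ℕ} (hk : k ∈ Finset.range (N+1))
    {x : ℝ} (hx : x ∈ Ioo a b) (hx0 : x ≠ 0) :
    HasDerivAt (Mfun o U p k) (U x ^ (2 * k) / U x * Bfun o o' U p A' k x) x := by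
  have hUne : U x ≠ 0 := fun h => hx0 ((H.Uzero hx).1 h)
  have hp := (H.ppos x hx).ne'
  have e : Mfun o U p k =ᶠ[𝓝 x] fun x => o k x * (U x / p x) * (U x ^ (2 * k) / U x) := by
    filter_upwards [isOpen_Ioo.mem_nhds hx, isOpen_ne.mem_nhds hx0] with y hy hy0
    have hUne : U y ≠ 0 := fun h => hy0 ((H.Uzero hy).1 h)
    have hp := (H.ppos y hy).ne'
    simp only [Mfun]
    field_simp
  refine (((((H.ho k hk x hx).mul (H.hA x hx)).mul
    (((H.hU x hx).pow (2 * k)).div (H.hU x hx) hUne))).congr_of_eventuallyEq e).congr_deriv ?_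
  simp only [Bfun, Pi.mul_apply, Pi.div_apply, Pi.pow_apply]
  rcases k with _ | k
  · simp; field_simp; ring
  · have : 2 * (k+1) - 1 = 2 * k + 1 := by omega
    rw [this]
    push_cast
    field_simp
    ring

theorem Mmono (H : Good a b g N o U p A' g' o') {k : ℕ} (hk : k ∈ Finset.range (N+1)) :
    MonotoneOn (Mfun o U p k) (Ico 0 b) := by
  apply monotoneOn_of_deriv_nonneg (convex_Ico 0 b)
  · exact (H.Mcont hk).mono fun x hx => ⟨H.ha.trans_le hx.1, hx.2⟩
  · rw [interior_Ico]
    intro x hx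
    exact (H.Mderiv hk ⟨H.ha.trans hx.1, hx.2⟩ hx.1.ne').differentiableAt.differentiableWithinAt
  · rw [interior_Ico]
    intro x hx
    have hx' : x ∈ Ioo a b := ⟨H.ha.trans hx.1, hx.2⟩
    rw [(H.Mderiv hk hx' hx.1.ne').deriv]
    have := (H.Upos hx').2 hx.1
    have := H.hB k hk x hx' hx.1.ne'
    positivity

theorem Manti (H : Good a b g N o U p A' g' o') {k : ℕ} (hk : k ∈ Finset.range (N+1)) :
    AntitoneOn (Mfun o U p k) (Ioc a 0) := by
  apply antitoneOn_of_deriv_nonpos (convex_Ioc a 0)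
  · exact (H.Mcont hk).mono fun x hx => ⟨hx.1, hx.2.trans_lt H.hb⟩
  · rw [interior_Ioc]
    intro x hx
    exact (H.Mderiv hk ⟨hx.1, hx.2.trans H.hb⟩ hx.2.ne).differentiableAt.differentiableWithinAt
  · rw [interior_Ioc]
    intro x hx
    have hx' : x ∈ Ioo a b := ⟨hx.1, hx.2.trans H.hb⟩
    rw [(H.Mderiv hk hx' hx.2.ne).deriv]
    have h1 := (H.Uneg hx').2 hx.2
    have h2 := H.hB k hk x hx' hx.2.ne
    have h3 : 0 ≤ U x ^ (2 * k) := by rw [pow_mul]; positivity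
    exact mul_nonpos_of_nonpos_of_nonneg (div_nonpos_of_nonneg_of_nonpos h3 h1.le) h2

theorem o0 (H : Good a b g N o U p A' g' o') {k : ℕ} (hk : k ∈ Finset.range (N+1))
    (hk0 : k ≠ 0) : 0 ≤ o k 0 := by
  have h1 : ∀ x ∈ Ioo 0 b, 0 ≤ o k x := by
    intro x hx
    have hx' : x ∈ Ioo a b := ⟨H.ha.trans hx.1, hx.2⟩
    have h := H.Mmono hk ⟨le_rfl, H.hb⟩ ⟨hx.1.le, hx.2⟩ hx.1.le
    have hk2 : 2 * k ≠ 0 := by omega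
    simp only [Mfun, H.U0, zero_pow hk2, mul_zero] at h
    have hU := (H.Upos hx').2 hx.1
    have hp := H.ppos x hx'
    have h2 := nonneg_of_mul_nonneg_left h (pow_pos hU (2*k))
    by_contra hc
    exact absurd h2 (not_le.2 (div_neg_of_neg_of_pos (not_le.1 hc) hp))
  have hc := (H.ho k hk 0 H.mem0).continuousAt.tendsto.mono_left
    (nhdsWithin_le_nhds (s := Ioi 0))
  refine ge_of_tendsto hc ?_
  filter_upwards [Ioo_mem_nhdsGT H.hb] with x hx using h1 x hx

theorem hB' (H : Good a b g N o U p A' g' o') {k : ℕ} (hk : k ∈ Finset.range (N+1)) {x : ℝ}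
    (hx : x ∈ Ioo a b) : 0 ≤ Bfun o o' U p A' k x := by
  by_cases hx0 : x = 0
  · subst hx0
    simp only [Bfun, H.U0, H.A0, zero_div, zero_mul, zero_add]
    by_cases hk0 : k = 0
    · subst hk0; norm_num
    · have := H.o0 hk hk0
      have : (0:ℝ) ≤ k := by positivity
      nlinarith
  · exact H.hB k hk x hx hx0

/-- the quantity `D`. -/
theorem gphi (H : Good a b g N o U p A' g' o') {x y : ℝ} (hx : x ∈ Ioo a b) :
    -g x - ∑ k ∈ Finset.range (N + 1), o k x * y ^ (2 * k + 1)
      = -(p x * (U x + y * phi N o p x y)) := by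
  have hp := (H.ppos x hx).ne'
  rw [H.hgU x hx, mul_add, phi, Finset.mul_sum, Finset.mul_sum, neg_add, sub_eq_add_neg]
  congr 2
  refine Finset.sum_congr rfl fun k _ => ?_
  field_simp
  ring

/-- Terms compare along a common ray. -/
theorem ray (H : Good a b g N o U p A' g' o') {x₁ x₂ r₁ r₂ c s : ℝ}
    (h1 : x₁ ∈ Ioo a b) (h2 : x₂ ∈ Ioo a b) (hr : r₂ ≤ r₁) (hr2 : 0 < r₂)
    (hU1 : U x₁ = r₁ * c) (hU2 : U x₂ = r₂ * c) {k : ℕ} (hk : k ∈ Finset.range (N+1)) :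
    o k x₂ / p x₂ * (r₂ * s) ^ (2 * k) ≤ o k x₁ / p x₁ * (r₁ * s) ^ (2 * k) := by
  have hr1 : 0 < r₁ := hr2.trans_le hr
  have key : ∀ x r, U x = r * c → c ≠ 0 → 
      o k x / p x * (r * s) ^ (2 * k) = Mfun o U p k x * (s / c) ^ (2 * k) := by
    intro x r hU hc
    rw [Mfun, hU, mul_assoc, ← mul_pow]
    congr 2
    field_simp
  have hsc : 0 ≤ (s / c) ^ (2 * k) := by rw [pow_mul]; positivity
  rcases lt_trichotomy c 0 with hc | hc | hc
  · rw [key _ _ hU1 hc.ne, key _ _ hU2 hc.ne]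
    refine mul_le_mul_of_nonneg_right ?_ hsc
    have u1 : x₁ < 0 := (H.Uneg h1).1 (by rw [hU1]; exact mul_neg_of_pos_of_neg hr1 hc)
    have u2 : x₂ < 0 := (H.Uneg h2).1 (by rw [hU2]; exact mul_neg_of_pos_of_neg hr2 hc)
    refine H.Manti hk ⟨h1.1, u1.le⟩ ⟨h2.1, u2.le⟩ ((H.Umono.le_iff_le h1 h2).1 ?_)
    rw [hU1, hU2]
    nlinarith
  · have e1 : x₁ = 0 := (H.Uzero h1).1 (by rw [hU1, hc, mul_zero])
    have e2 : x₂ = 0 := (H.Uzero h2).1 (by rw [hU2, hc, mul_zero])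
    rw [e1, e2, H.p0, div_one]
    by_cases hk0 : k = 0
    · simp [hk0]
    · refine mul_le_mul_of_nonneg_left ?_ (H.o0 hk hk0)
      rw [mul_pow, mul_pow]
      have : 0 ≤ s ^ (2 * k) := by rw [pow_mul]; positivity
      gcongr
  · rw [key _ _ hU1 hc.ne', key _ _ hU2 hc.ne']
    refine mul_le_mul_of_nonneg_right ?_ hsc
    have u1 : 0 < x₁ := (H.Upos h1).1 (by rw [hU1]; exact mul_pos hr1 hc)
    have u2 : 0 < x₂ := (H.Upos h2).1 (by rw [hU2]; exact mul_pos hr2 hc)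
    refine H.Mmono hk ⟨u2.le, h2.2⟩ ⟨u1.le, h1.2⟩ ((H.Umono.le_iff_le h2 h1).1 ?_)
    rw [hU1, hU2]
    nlinarith

theorem phi_mono (H : Good a b g N o U p A' g' o') {x₁ x₂ r₁ r₂ c s : ℝ}
    (h1 : x₁ ∈ Ioo a b) (h2 : x₂ ∈ Ioo a b) (hr : r₂ ≤ r₁) (hr2 : 0 < r₂)
    (hU1 : U x₁ = r₁ * c) (hU2 : U x₂ = r₂ * c) :
    phi N o p x₂ (r₂ * s) ≤ phi N o p x₁ (r₁ * s) :=
  Finset.sum_le_sum fun _ hk => H.ray h1 h2 hr hr2 hU1 hU2 hk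

theorem const_deriv {f : ℝ → ℝ} {x₁ x₂ d : ℝ} (hne : x₁ ≠ x₂) (hd : HasDerivAt f d x₁)
    (hc : ∀ z ∈ uIcc x₁ x₂, f z = f x₁) : d = 0 := by
  have hu : UniqueDiffWithinAt ℝ (uIcc x₁ x₂) x₁ := by
    apply uniqueDiffOn_Icc (by simpa using hne.symm)
    exact left_mem_uIcc
  have h1 := hd.hasDerivWithinAt (s := uIcc x₁ x₂)
  have h2 : HasDerivWithinAt f 0 (uIcc x₁ x₂) x₁ :=
    (hasDerivWithinAt_const x₁ _ (f x₁)).congr hc rfl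
  exact hu.eq_deriv _ h1 h2

/-- equality case. -/
theorem phi_eq (H : Good a b g N o U p A' g' o') {x₁ x₂ r₁ r₂ c s : ℝ}
    (h1 : x₁ ∈ Ioo a b) (h2 : x₂ ∈ Ioo a b) (hr : r₁ ≠ r₂) (hr1 : 0 < r₁) (hr2 : 0 < r₂)
    (hU1 : U x₁ = r₁ * c) (hU2 : U x₂ = r₂ * c) (hs : s ≠ 0) (hc : c ≠ 0)
    (he : phi N o p x₂ (r₂ * s) = phi N o p x₁ (r₁ * s))
    {k : ℕ} (hk : k ∈ Finset.range (N+1)) : Bfun o o' U p A' k x₁ = 0 := by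
  have hterm : o k x₂ / p x₂ * (r₂ * s) ^ (2 * k) = o k x₁ / p x₁ * (r₁ * s) ^ (2 * k) := by
    rcases le_total r₂ r₁ with h | h
    · exact (Finset.sum_eq_sum_iff_of_le fun k hk => H.ray h1 h2 h hr2 hU1 hU2 hk).1 he k hk
    · exact ((Finset.sum_eq_sum_iff_of_le fun k hk =>
        H.ray h2 h1 h hr1 hU2 hU1 hk).1 he.symm k hk).symm
  have key : ∀ x r, U x = r * c →
      o k x / p x * (r * s) ^ (2 * k) = Mfun o U p k x * (s / c) ^ (2 * k) := by
    intro x r hU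
    rw [Mfun, hU, mul_assoc, ← mul_pow]
    congr 2
    field_simp
  have hM : Mfun o U p k x₂ = Mfun o U p k x₁ := by
    rw [key _ _ hU1, key _ _ hU2] at hterm
    exact mul_right_cancel₀ (pow_ne_zero _ (div_ne_zero hs hc)) hterm
  have hne : x₁ ≠ x₂ := by
    rintro rfl
    rw [hU1] at hU2
    exact hr (mul_right_cancel₀ hc hU2)
  have hx0 : x₁ ≠ 0 := by
    rintro rfl
    rw [H.U0] at hU1
    exact (mul_ne_zero hr1.ne' hc) hU1.symm
  have hconst : ∀ z ∈ uIcc x₁ x₂, Mfun o U p k z = Mfun o U p k x₁ := by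
    intro z hz
    rcases lt_or_gt_of_ne hc with hc | hc
    · have u1 : x₁ < 0 := (H.Uneg h1).1 (by rw [hU1]; exact mul_neg_of_pos_of_neg hr1 hc)
      have u2 : x₂ < 0 := (H.Uneg h2).1 (by rw [hU2]; exact mul_neg_of_pos_of_neg hr2 hc)
      have m := H.Manti hk
      rcases le_total x₁ x₂ with hl | hl
      · rw [uIcc_of_le hl] at hz
        have m1 := m ⟨h1.1, u1.le⟩ ⟨h1.1.trans_le hz.1, hz.2.trans u2.le⟩ hz.1
        have m2 := m ⟨h1.1.trans_le hz.1, hz.2.trans u2.le⟩ ⟨h2.1, u2.le⟩ hz.2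
        linarith
      · rw [uIcc_of_ge hl] at hz
        have m1 := m ⟨h2.1, u2.le⟩ ⟨h2.1.trans_le hz.1, hz.2.trans u1.le⟩ hz.1
        have m2 := m ⟨h2.1.trans_le hz.1, hz.2.trans u1.le⟩ ⟨h1.1, u1.le⟩ hz.2
        linarith
    · have u1 : 0 < x₁ := (H.Upos h1).1 (by rw [hU1]; exact mul_pos hr1 hc)
      have u2 : 0 < x₂ := (H.Upos h2).1 (by rw [hU2]; exact mul_pos hr2 hc)
      have m := H.Mmono hk
      rcases le_total x₁ x₂ with hl | hl
      · rw [uIcc_of_le hl] at hz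
        have m1 := m ⟨u1.le, h1.2⟩ ⟨u1.le.trans hz.1, hz.2.trans_lt h2.2⟩ hz.1
        have m2 := m ⟨u1.le.trans hz.1, hz.2.trans_lt h2.2⟩ ⟨u2.le, h2.2⟩ hz.2
        linarith
      · rw [uIcc_of_ge hl] at hz
        have m1 := m ⟨u2.le, h2.2⟩ ⟨u2.le.trans hz.1, hz.2.trans_lt h1.2⟩ hz.1
        have m2 := m ⟨u2.le.trans hz.1, hz.2.trans_lt h1.2⟩ ⟨u1.le, h1.2⟩ hz.2
        linarith
  have hd := const_deriv hne (H.Mderiv hk h1 hx0) hconst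
  have hUne : U x₁ ≠ 0 := fun h => hx0 ((H.Uzero h1).1 h)
  rcases mul_eq_zero.1 hd with h | h
  · exact absurd h (div_ne_zero (pow_ne_zero _ hUne) hUne)
  · exact h

/-- An orbit in the strip: the abstract form of a cycle. -/
structure Orb (a b : ℝ) (g : ℝ → ℝ) (N : ℕ) (o : ℕ → ℝ → ℝ) (x y : ℝ → ℝ) (T : ℝ) : Prop where
  mem : ∀ t, x t ∈ Ioo a b
  hx : ∀ t, HasDerivAt x (y t) t
  hy : ∀ t, HasDerivAt y
    (-g (x t) - ∑ k ∈ Finset.range (N + 1), o k (x t) * y t ^ (2 * k + 1)) t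
  T0 : 0 < T
  px : Function.Periodic x T
  py : Function.Periodic y T
  nc : ∃ t, x t ≠ 0

theorem anti_per {f : ℝ → ℝ} {T : ℝ} (hT : 0 < T) (hf : Antitone f) (hp : Function.Periodic f T)
    (s t : ℝ) : f s = f t := by
  have key : ∀ s t, f s ≤ f t := by
    intro s t
    obtain ⟨u, hu, e⟩ := hp.exists_mem_Ico hT s t
    rw [e]
    exact hf hu.1
  exact le_antisymm (key s t) (key t s)

section
variable {x y : ℝ → ℝ} {T : ℝ}

/-- wedge of radial field and vector field. -/
def Dfun (g : ℝ → ℝ) (N : ℕ) (o : ℕ → ℝ → ℝ) (U p : ℝ → ℝ) (x y : ℝ → ℝ) (t : ℝ) : ℝ :=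
  U (x t) / p (x t) * (-g (x t) - ∑ k ∈ Finset.range (N + 1), o k (x t) * y t ^ (2 * k + 1))
    - y t ^ 2

theorem Dderiv (H : Good a b g N o U p A' g' o') (O : Orb a b g N o x y T) (t : ℝ) :
    HasDerivAt (Dfun g N o U p x y)
      (gOddDiv N o (x t, y t) * Dfun g N o U p x y t -
        ∑ k ∈ Finset.range (N+1), y t ^ (2 * k + 2) * Bfun o o' U p A' k (x t)) t := by
  have hm := O.mem t
  set F2 := -g (x t) - ∑ k ∈ Finset.range (N + 1), o k (x t) * y t ^ (2 * k + 1) with hF2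
  have hA : HasDerivAt (fun t => U (x t) / p (x t)) (A' (x t) * y t) t :=
    (H.hA _ hm).comp t (O.hx t)
  have hg : HasDerivAt (fun t => g (x t)) (g' (x t) * y t) t := (H.hg _ hm).comp t (O.hx t)
  have hS : HasDerivAt (fun t => ∑ k ∈ Finset.range (N + 1), o k (x t) * y t ^ (2 * k + 1))
      (∑ k ∈ Finset.range (N + 1), (o' k (x t) * y t * y t ^ (2 * k + 1)
        + o k (x t) * ((2 * (k:ℝ) + 1) * y t ^ (2 * k) * F2))) t := by
    apply HasDerivAt.fun_sum
    intro k hk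
    have h1 : HasDerivAt (fun t => o k (x t)) (o' k (x t) * y t) t :=
      (H.ho k hk _ hm).comp t (O.hx t)
    have h2 := (O.hy t).fun_pow (2 * k + 1)
    refine (h1.fun_mul h2).congr_deriv ?_
    rw [← hF2]
    push_cast
    simp
  have hD := (hA.fun_mul (hg.fun_neg.fun_sub hS)).fun_sub ((O.hy t).fun_pow 2)
  refine hD.congr_deriv ?_
  have e := H.hAg _ hm
  rw [← hF2]
  simp only [gOddDiv, Dfun, Bfun]
  rw [← hF2]
  set A := U (x t) / p (x t)
  rw [Finset.sum_add_distrib]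
  have e1 : ∑ k ∈ Finset.range (N + 1), o' k (x t) * y t * y t ^ (2 * k + 1)
      = ∑ k ∈ Finset.range (N + 1), y t ^ (2 * k + 2) * o' k (x t) :=
    Finset.sum_congr rfl fun k _ => by ring
  have e2 : ∑ k ∈ Finset.range (N + 1), o k (x t) * ((2 * (k:ℝ) + 1) * y t ^ (2 * k) * F2)
      = F2 * ∑ k ∈ Finset.range (N + 1), (2 * (k:ℝ) + 1) * o k (x t) * y t ^ (2 * k) := by
    rw [Finset.mul_sum]
    exact Finset.sum_congr rfl fun k _ => by ring
  have e3 : ∑ k ∈ Finset.range (N + 1), y t ^ (2 * k + 2) *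
        (A * o' k (x t) + (2 * (k:ℝ) + 1) * o k (x t) - (2 - A' (x t)) * o k (x t))
      = A * (∑ k ∈ Finset.range (N + 1), y t ^ (2 * k + 2) * o' k (x t))
        + y t ^ 2 * (∑ k ∈ Finset.range (N + 1), (2 * (k:ℝ) + 1) * o k (x t) * y t ^ (2 * k))
        - (2 - A' (x t)) * y t * ∑ k ∈ Finset.range (N + 1), o k (x t) * y t ^ (2 * k + 1) := by
    rw [Finset.mul_sum, Finset.mul_sum, Finset.mul_sum, ← Finset.sum_add_distrib,
      ← Finset.sum_sub_distrib]
    exact Finset.sum_congr rfl fun k _ => by ring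
  rw [e1, e2, e3]
  have e4 : ∑ k ∈ Finset.range (N + 1), o k (x t) * y t ^ (2 * k + 1) = -g (x t) - F2 := by
    rw [hF2]; ring
  rw [e4]
  push_cast
  linear_combination (-y t) * e

theorem xcont (O : Orb a b g N o x y T) : Continuous x :=
  continuous_iff_continuousAt.2 fun t => (O.hx t).continuousAt
theorem ycont (O : Orb a b g N o x y T) : Continuous y :=
  continuous_iff_continuousAt.2 fun t => (O.hy t).continuousAt
theorem ocont (H : Good a b g N o U p A' g' o') (O : Orb a b g N o x y T) {k : ℕ}
    (hk : k ∈ Finset.range (N+1)) : Continuous fun t => o k (x t) :=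
  continuous_iff_continuousAt.2 fun t =>
    (H.ho k hk _ (O.mem t)).continuousAt.comp (O.hx t).continuousAt

theorem divcont (H : Good a b g N o U p A' g' o') (O : Orb a b g N o x y T) :
    Continuous fun t => gOddDiv N o (x t, y t) := by
  unfold gOddDiv
  refine (continuous_finsetSum _ fun k hk => ?_).neg
  exact (continuous_const.mul (ocont H O hk)).mul ((ycont O).pow _)

theorem Dper (O : Orb a b g N o x y T) : Function.Periodic (Dfun g N o U p x y) T := by
  intro t
  simp only [Dfun, O.px t, O.py t]

theorem Kderiv (H : Good a b g N o U p A' g' o') (O : Orb a b g N o x y T) (t : ℝ) :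
    HasDerivAt (fun t => Dfun g N o U p x y t *
        Real.exp (-∫ s in (0:ℝ)..t, gOddDiv N o (x s, y s)))
      (-(∑ k ∈ Finset.range (N+1), y t ^ (2 * k + 2) * Bfun o o' U p A' k (x t)) *
        Real.exp (-∫ s in (0:ℝ)..t, gOddDiv N o (x s, y s))) t := by
  have h1 := ((divcont H O).integral_hasStrictDerivAt 0 t).hasDerivAt
  refine ((Dderiv H O t).fun_mul (h1.fun_neg.exp)).congr_deriv ?_
  ring

theorem Bsum_nonneg (H : Good a b g N o U p A' g' o') (O : Orb a b g N o x y T) (t : ℝ) :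
    ∀ k ∈ Finset.range (N+1), 0 ≤ y t ^ (2 * k + 2) * Bfun o o' U p A' k (x t) := by
  intro k hk
  refine mul_nonneg ?_ (H.hB' hk (O.mem t))
  rw [show 2 * k + 2 = 2 * (k + 1) by ring, pow_mul]
  positivity

theorem Kanti (H : Good a b g N o U p A' g' o') (O : Orb a b g N o x y T) :
    Antitone (fun t => Dfun g N o U p x y t *
        Real.exp (-∫ s in (0:ℝ)..t, gOddDiv N o (x s, y s))) := by
  apply antitone_of_deriv_nonpos
  · exact fun t => (Kderiv H O t).differentiableAt
  · intro t
    rw [(Kderiv H O t).deriv]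
    have := Finset.sum_nonneg (Bsum_nonneg H O t)
    have := Real.exp_pos (-∫ s in (0:ℝ)..t, gOddDiv N o (x s, y s))
    nlinarith

theorem Dneg (H : Good a b g N o U p A' g' o') (O : Orb a b g N o x y T) (t : ℝ) :
    Dfun g N o U p x y t < 0 := by
  have hper : Function.Periodic (fun t => x t ^ 2) T := fun t => by simp only [O.px t]
  obtain ⟨M, ⟨t0, ht0⟩, hM⟩ := (hper.compact_of_continuous O.T0.ne'
    ((xcont O).pow 2)).exists_isGreatest (range_nonempty _)
  have hx0 : x t0 ≠ 0 := by
    intro h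
    obtain ⟨t1, h1⟩ := O.nc
    have h2 : x t1 ^ 2 ≤ M := hM ⟨t1, rfl⟩
    have h3 : x t0 ^ 2 = M := ht0
    rw [h] at h3
    have : 0 < x t1 ^ 2 := by positivity
    linarith
  have hmax : IsLocalMax (fun t => x t ^ 2) t0 :=
    Eventually.of_forall fun s => by
      have := hM ⟨s, rfl⟩
      rw [← ht0] at this
      exact this
  have hy0 : y t0 = 0 := by
    have := hmax.hasDerivAt_eq_zero ((O.hx t0).fun_pow 2)
    simpa [hx0] using this
  have hD0 : Dfun g N o U p x y t0 < 0 := by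
    have hm := O.mem t0
    have hp := H.ppos _ hm
    have hU : U (x t0) ≠ 0 := fun h => hx0 ((H.Uzero hm).1 h)
    have : Dfun g N o U p x y t0 = - U (x t0) ^ 2 := by
      simp [Dfun, hy0, H.hgU _ hm]
      field_simp
    rw [this]
    have : 0 < U (x t0) ^ 2 := by positivity
    linarith
  obtain ⟨s, hs, e⟩ := (Dper (U := U) (p := p) O).exists_mem_Ico O.T0 t t0
  rw [e]
  have h := Kanti H O hs.1
  simp only at h
  have h2 := h.trans_lt (mul_neg_of_neg_of_pos hD0 (Real.exp_pos _))
  exact neg_of_mul_neg_left h2 (Real.exp_pos _).le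

theorem hyp_aux (H : Good a b g N o U p A' g' o') (O : Orb a b g N o x y T)
    (h0 : ∫ s in (0:ℝ)..T, gOddDiv N o (x s, y s) = 0) (t : ℝ) (hy : y t ≠ 0)
    {k : ℕ} (hk : k ∈ Finset.range (N+1)) : Bfun o o' U p A' k (x t) = 0 := by
  have hdp : Function.Periodic (fun t => gOddDiv N o (x t, y t)) T := fun t => by
    simp only [O.px t, O.py t]
  have hper : Function.Periodic (fun t => Dfun g N o U p x y t *
        Real.exp (-∫ s in (0:ℝ)..t, gOddDiv N o (x s, y s))) T := by
    intro t
    have := hdp.intervalIntegral_add_eq_add 0 t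
      (fun t₁ t₂ => (divcont H O).intervalIntegrable t₁ t₂)
    simp only [zero_add] at this
    simp only [Dper O t, this, h0, add_zero]
  have hc := anti_per O.T0 (Kanti H O) hper
  have hd := Kderiv H O t
  have hz := hd.unique ((hasDerivAt_const t _).congr_of_eventuallyEq
    (Eventually.of_forall fun s => hc s t))
  have hs : ∑ k ∈ Finset.range (N+1), y t ^ (2 * k + 2) * Bfun o o' U p A' k (x t) = 0 := by
    have := Real.exp_pos (-∫ s in (0:ℝ)..t, gOddDiv N o (x s, y s))
    rcases mul_eq_zero.1 hz with h | h
    · linarith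
    · exact absurd h this.ne'
  have := (Finset.sum_eq_zero_iff_of_nonneg (Bsum_nonneg H O t)).1 hs k hk
  exact (mul_eq_zero.1 this).resolve_left (pow_ne_zero _ hy)

end

/-- Polar description of an orbit. -/
structure Pol (N : ℕ) (o : ℕ → ℝ → ℝ) (U p x y R τ : ℝ → ℝ) (n : ℤ) : Prop where
  n0 : n ≠ 0
  surj : Function.Surjective τ
  hU : ∀ θ, U (x (τ θ)) = Real.exp (R θ) * Real.cos θ
  hy : ∀ θ, y (τ θ) = Real.exp (R θ) * Real.sin θ
  pos : ∀ θ, 0 < 1 + Real.sin θ * Real.cos θ * phi N o p (x (τ θ)) (y (τ θ))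
  hR : ∀ θ, HasDerivAt R (Real.sin θ ^ 2 * phi N o p (x (τ θ)) (y (τ θ)) /
      (1 + Real.sin θ * Real.cos θ * phi N o p (x (τ θ)) (y (τ θ)))) θ
  per : Function.Periodic R (2 * π * n)

theorem inv_exists {f f' : ℝ → ℝ} (hf : ∀ t, HasDerivAt f (f' t) t) (hneg : ∀ t, f' t < 0)
    (hs : Function.Surjective f) :
    ∃ τ : ℝ → ℝ, (∀ θ, f (τ θ) = θ) ∧ (∀ t, τ (f t) = t) ∧
      ∀ θ, HasDerivAt τ (f' (τ θ))⁻¹ θ := by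
  have hm : StrictMono (fun t => -f t) := by
    apply strictMono_of_deriv_pos
    intro t
    rw [(hf t).fun_neg.deriv]
    linarith [hneg t]
  have hs' : Function.Surjective (fun t => -f t) := fun z => by
    obtain ⟨t, ht⟩ := hs (-z)
    exact ⟨t, by simp [ht]⟩
  let e := hm.orderIsoOfSurjective _ hs'
  have he : ∀ t, e t = - f t := fun t => rfl
  have h1 : ∀ θ, f (e.symm (-θ)) = θ := fun θ => by
    have := e.apply_symm_apply (-θ)
    rw [he] at this
    linarith
  refine ⟨fun θ => e.symm (-θ), h1, fun t => ?_, fun θ => ?_⟩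
  · show e.symm (-f t) = t
    rw [← he, e.symm_apply_apply]
  · apply HasDerivAt.of_local_left_inverse (f := f)
    · exact (e.symm.continuous.comp continuous_neg).continuousAt
    · exact hf _
    · exact (hneg _).ne
    · exact Eventually.of_forall h1

theorem pol_exists {x y : ℝ → ℝ} {T : ℝ} (H : Good a b g N o U p A' g' o')
    (O : Orb a b g N o x y T) : ∃ R τ n, Pol N o U p x y R τ n := by
  set Y : ℝ → ℝ := fun t => -g (x t) - ∑ k ∈ Finset.range (N + 1), o k (x t) * y t ^ (2 * k + 1)
    with hYdef
  set ph : ℝ → ℝ := fun t => phi N o p (x t) (y t) with hph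
  set u : ℝ → ℝ := fun t => U (x t) with hu
  set P : ℝ → ℝ := fun t => p (x t) with hPdef
  have hY : ∀ t, Y t = -(P t * (u t + y t * ph t)) := fun t => H.gphi (O.mem t)
  have hP : ∀ t, 0 < P t := fun t => H.ppos _ (O.mem t)
  have hD : ∀ t, 0 < u t ^ 2 + y t ^ 2 + u t * y t * ph t := by
    intro t
    have h := Dneg H O t
    have e : Dfun g N o U p x y t = u t / P t * Y t - y t ^ 2 := rfl
    rw [e, hY] at h
    have := (hP t).ne'
    have e2 : u t / P t * -(P t * (u t + y t * ph t)) = -(u t * (u t + y t * ph t)) := by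
      field_simp
    rw [e2] at h
    linarith
  have hr : ∀ t, 0 < u t ^ 2 + y t ^ 2 := by
    intro t
    rcases eq_or_ne (u t) 0 with h | h
    · have := hD t
      rw [h] at this
      rw [h]
      simpa using this
    · positivity
  set z : ℝ → ℂ := fun t => (u t : ℂ) + (y t : ℂ) * Complex.I with hz
  have hzre : ∀ t, (z t).re = u t := fun t => by simp [hz]
  have hzim : ∀ t, (z t).im = y t := fun t => by simp [hz]
  have hzne : ∀ t, z t ≠ 0 := by
    intro t h
    have h1 := hzre t
    have h2 := hzim t
    rw [h] at h1 h2
    have := hr t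
    rw [← h1, ← h2] at this
    simp at this
  set z' : ℝ → ℂ := fun t => ((P t * y t : ℝ) : ℂ) + (Y t : ℂ) * Complex.I with hz'
  have hu' : ∀ t, HasDerivAt u (P t * y t) t := fun t => (H.hU _ (O.mem t)).comp t (O.hx t)
  have hzd : ∀ t, HasDerivAt z (z' t) t := fun t =>
    (hu' t).ofReal_comp.fun_add ((O.hy t).ofReal_comp.mul_const Complex.I)
  have hPc : Continuous P := H.hp.comp_continuous (xcont O) O.mem
  have hgc : Continuous fun t => g (x t) := continuous_iff_continuousAt.2 fun t =>
    (H.hg _ (O.mem t)).continuousAt.comp (O.hx t).continuousAt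
  have hYc : Continuous Y := hgc.neg.sub (continuous_finsetSum _ fun k hk =>
    (ocont H O hk).mul ((ycont O).pow _))
  have hzc : Continuous z := continuous_iff_continuousAt.2 fun t => (hzd t).continuousAt
  have hz'c : Continuous z' :=
    (Complex.continuous_ofReal.comp (hPc.mul (ycont O))).add
      ((Complex.continuous_ofReal.comp hYc).mul continuous_const)
  have hqc : Continuous fun t => z' t / z t := hz'c.div hzc hzne
  set L : ℝ → ℂ := fun t => Complex.log (z 0) + ∫ s in (0:ℝ)..t, z' s / z s with hL
  have hLd : ∀ t, HasDerivAt L (z' t / z t) t := fun t =>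
    ((hqc.integral_hasStrictDerivAt 0 t).hasDerivAt).const_add _
  have hexp : ∀ t, Complex.exp (L t) = z t := by
    have hd : ∀ t, HasDerivAt (fun t => Complex.exp (-L t) * z t) 0 t := by
      intro t
      refine (((hLd t).fun_neg.cexp).fun_mul (hzd t)).congr_deriv ?_
      have := hzne t
      field_simp
      ring
    have hc : ∀ t, Complex.exp (-L t) * z t = 1 := by
      intro t
      have := is_const_of_deriv_eq_zero (fun t => (hd t).differentiableAt)
        (fun t => (hd t).deriv) t 0
      rw [this]
      simp [hL, Complex.exp_neg, Complex.exp_log (hzne 0), hzne 0]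
    intro t
    have := hc t
    rw [Complex.exp_neg] at this
    have h2 := Complex.exp_ne_zero (L t)
    field_simp at this
    exact this.symm
  have hzp : ∀ t, z (t + T) = z t := fun t => by
    simp only [hz, hu, O.px t, O.py t]
  have hz'p : ∀ t, z' (t + T) = z' t := fun t => by
    simp only [hz', hPdef, hYdef, O.px t, O.py t]
  obtain ⟨n, hn⟩ : ∃ n : ℤ, L (0 + T) = L 0 + n * (2 * π * Complex.I) := by
    rw [← Complex.exp_eq_exp_iff_exists_int, hexp, hexp, hzp]
  have hLp : ∀ t, L (t + T) = L t + n * (2 * π * Complex.I) := by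
    intro t
    have hd : ∀ t, HasDerivAt (fun t => L (t + T) - L t) 0 t := by
      intro t
      refine (((hLd (t + T)).comp_add_const t T).fun_sub (hLd t)).congr_deriv ?_
      rw [hzp, hz'p, sub_self]
    have := is_const_of_deriv_eq_zero (fun t => (hd t).differentiableAt)
        (fun t => (hd t).deriv) t 0
    simp only [hn] at this
    rw [sub_eq_iff_eq_add] at this
    rw [this]; ring
  have hqre : ∀ t, (z' t / z t).re = - P t * y t ^ 2 * ph t / (u t ^ 2 + y t ^ 2) := by
    intro t
    have := (hr t).ne'
    rw [Complex.div_re, hzre, hzim, Complex.normSq_apply, hzre, hzim]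
    have e1 : (z' t).re = P t * y t := by simp [hz']
    have e2 : (z' t).im = Y t := by simp [hz']
    rw [e1, e2, hY, ← pow_two, ← pow_two]
    field_simp
    ring
  have hqim : ∀ t, (z' t / z t).im =
      - P t * (u t ^ 2 + y t ^ 2 + u t * y t * ph t) / (u t ^ 2 + y t ^ 2) := by
    intro t
    have := (hr t).ne'
    rw [Complex.div_im, hzre, hzim, Complex.normSq_apply, hzre, hzim]
    have e1 : (z' t).re = P t * y t := by simp [hz']
    have e2 : (z' t).im = Y t := by simp [hz']
    rw [e1, e2, hY, ← pow_two, ← pow_two]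
    field_simp
    ring
  have hRd : ∀ t, HasDerivAt (fun t => (L t).re) (z' t / z t).re t := fun t =>
    Complex.reCLM.hasFDerivAt.comp_hasDerivAt t (hLd t)
  have hTd : ∀ t, HasDerivAt (fun t => (L t).im) (z' t / z t).im t := fun t =>
    Complex.imCLM.hasFDerivAt.comp_hasDerivAt t (hLd t)
  have hTneg : ∀ t, (z' t / z t).im < 0 := by
    intro t
    rw [hqim]
    have := hr t
    have := mul_pos (hP t) (hD t)
    apply div_neg_of_neg_of_pos _ (hr t)
    linarith
  have hTp : ∀ t, (L (t + T)).im = (L t).im + 2 * π * n := by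
    intro t
    rw [hLp]
    simp
    ring
  have hRp : ∀ t, (L (t + T)).re = (L t).re := by
    intro t
    rw [hLp]
    simp
  have hanti : StrictAnti fun t => (L t).im := by
    apply strictAnti_of_deriv_neg
    intro t
    rw [(hTd t).deriv]
    exact hTneg t
  have hnneg : n < 0 := by
    have h1 : (L (0 + T)).im < (L 0).im := hanti (by linarith [O.T0])
    rw [hTp] at h1
    have h2 : π * n < 0 := by linarith
    have h3 : (n:ℝ) < 0 := by
      by_contra hc
      have := mul_nonneg pi_pos.le (not_lt.1 hc)
      linarith
    exact_mod_cast h3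
  have hTc : Continuous fun t => (L t).im :=
    continuous_iff_continuousAt.2 fun t => (hTd t).continuousAt
  have hTN : ∀ (j : ℕ) t, (L (t + j * T)).im = (L t).im + j * (2 * π * n) := by
    intro j
    induction j with
    | zero => intro t; simp
    | succ j ih =>
      intro t
      push_cast
      rw [show t + ((j:ℝ) + 1) * T = (t + j * T) + T by ring, hTp, ih]
      ring
  have hn1 : 2 * π * (n:ℝ) ≤ -1 := by
    have : (n:ℝ) ≤ -1 := by exact_mod_cast (by omega : n ≤ -1)
    nlinarith [Real.pi_gt_three]
  have hsurj : Function.Surjective fun t => (L t).im := by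
    intro θ
    apply mem_range_of_exists_le_of_exists_ge hTc
    · obtain ⟨j, hj⟩ := exists_nat_gt ((L 0).im - θ)
      refine ⟨0 + j * T, ?_⟩
      rw [hTN]
      have : (0:ℝ) ≤ j := by positivity
      nlinarith
    · obtain ⟨j, hj⟩ := exists_nat_gt (θ - (L 0).im)
      refine ⟨-(j * T), ?_⟩
      have h := hTN j (-(j * T))
      rw [neg_add_cancel] at h
      have : (0:ℝ) ≤ j := by positivity
      nlinarith
  obtain ⟨τ, h1, h2, h3⟩ := inv_exists hTd hTneg hsurj
  have hzpol : ∀ θ, z (τ θ) = Real.exp ((L (τ θ)).re) * (Real.cos θ + Real.sin θ * Complex.I) := by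
    intro θ
    rw [← hexp, Complex.exp_eq_exp_re_mul_sin_add_cos, h1]
    push_cast
    ring
  have hup : ∀ θ, u (τ θ) = Real.exp ((L (τ θ)).re) * Real.cos θ := by
    intro θ
    rw [← hzre, hzpol, Complex.re_ofReal_mul]
    simp [← Complex.ofReal_cos, ← Complex.ofReal_sin]
  have hyp : ∀ θ, y (τ θ) = Real.exp ((L (τ θ)).re) * Real.sin θ := by
    intro θ
    rw [← hzim, hzpol, Complex.im_ofReal_mul]
    simp [← Complex.ofReal_cos, ← Complex.ofReal_sin]
  have hr2 : ∀ θ, u (τ θ) ^ 2 + y (τ θ) ^ 2 = Real.exp ((L (τ θ)).re) ^ 2 := by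
    intro θ
    rw [hup, hyp, mul_pow, mul_pow, ← mul_add, Real.cos_sq_add_sin_sq, mul_one]
  have hD2 : ∀ θ, u (τ θ) ^ 2 + y (τ θ) ^ 2 + u (τ θ) * y (τ θ) * ph (τ θ) =
      Real.exp ((L (τ θ)).re) ^ 2 * (1 + Real.sin θ * Real.cos θ * ph (τ θ)) := by
    intro θ
    rw [hr2, hup, hyp]
    ring
  have hpos : ∀ θ, 0 < 1 + Real.sin θ * Real.cos θ * ph (τ θ) := by
    intro θ
    have := hD (τ θ)
    rw [hD2] at this
    exact pos_of_mul_pos_right this (by positivity)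
  refine ⟨fun θ => (L (τ θ)).re, τ, n, hnneg.ne, fun t => ⟨_, h2 t⟩, hup, hyp, hpos, fun θ => ?_, ?_⟩
  · refine ((hRd (τ θ)).comp θ (h3 θ)).congr_deriv ?_
    have e1 := hP (τ θ)
    have e2 := (hpos θ)
    have e3 := Real.exp_pos ((L (τ θ)).re)
    show _ = Real.sin θ ^ 2 * ph (τ θ) / (1 + Real.sin θ * Real.cos θ * ph (τ θ))
    rw [hqre, hqim, hD2, hr2, hyp]
    field_simp
  · intro θ
    have e : τ (θ + 2 * π * n) = τ θ + T := by
      rw [← h2 (τ θ + T), hTp, h1]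
    simp only [e, hRp]

theorem no_flat {x y R τ : ℝ → ℝ} {n : ℤ} (H : Good a b g N o U p A' g' o')
    (hmem : ∀ t, x t ∈ Ioo a b) (Q : Pol N o U p x y R τ n)
    (hB : ∀ θ, Real.sin θ ≠ 0 → Real.cos θ ≠ 0 →
      ∀ k ∈ Finset.range (N+1), Bfun o o' U p A' k (x (τ θ)) = 0) : False := by
  obtain ⟨xs, hxs, hlim, hne⟩ := H.hs
  have hRc : Continuous R := continuous_iff_continuousAt.2 fun θ => (Q.hR θ).continuousAt
  set f : ℝ → ℝ := fun θ => Real.exp (R θ) * Real.cos θ with hf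
  have hfc : Continuous f := (Real.continuous_exp.comp hRc).mul Real.continuous_cos
  have hpi := Real.pi_pos
  have f1 : 0 < f (π / 4) :=
    mul_pos (Real.exp_pos _) (Real.cos_pos_of_mem_Ioo ⟨by linarith, by linarith⟩)
  have f2 : f (3 * π / 4) < 0 :=
    mul_neg_of_pos_of_neg (Real.exp_pos _)
      (Real.cos_neg_of_pi_div_two_lt_of_lt (by linarith) (by linarith))
  have hUl : Tendsto (fun m => U (xs m)) atTop (𝓝 0) := by
    have := (H.hU 0 H.mem0).continuousAt.tendsto.comp hlim
    rwa [H.U0] at this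
  obtain ⟨m, hm1, hm2⟩ := ((hUl.eventually_lt_const f1).and (hUl.eventually_const_lt f2)).exists
  obtain ⟨θ, hθ, e⟩ := intermediate_value_Icc' (by linarith : π / 4 ≤ 3 * π / 4) hfc.continuousOn
    ⟨hm2.le, hm1.le⟩
  have hx : x (τ θ) = xs m := by
    apply H.Umono.injOn (hmem _) (hxs m).1
    rw [Q.hU]
    exact e
  have hs : Real.sin θ ≠ 0 :=
    (Real.sin_pos_of_pos_of_lt_pi (by linarith [hθ.1]) (by linarith [hθ.2])).ne'
  have hc : Real.cos θ ≠ 0 := by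
    intro h
    have : U (xs m) = 0 := by rw [← e]; simp [hf, h]
    exact (hxs m).2 ((H.Uzero (hxs m).1).1 this)
  obtain ⟨k, hk, hk'⟩ := hne m
  exact hk' (hx ▸ hB θ hs hc k hk)

theorem radial_eq {x₁ y₁ R₁ τ₁ x₂ y₂ R₂ τ₂ : ℝ → ℝ} {n₁ n₂ : ℤ}
    (H : Good a b g N o U p A' g' o')
    (hm₁ : ∀ t, x₁ t ∈ Ioo a b) (Q₁ : Pol N o U p x₁ y₁ R₁ τ₁ n₁)
    (hm₂ : ∀ t, x₂ t ∈ Ioo a b) (Q₂ : Pol N o U p x₂ y₂ R₂ τ₂ n₂) (θ : ℝ) : R₁ θ = R₂ θ := by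
  set φ₁ : ℝ → ℝ := fun θ => phi N o p (x₁ (τ₁ θ)) (y₁ (τ₁ θ)) with hφ₁
  set φ₂ : ℝ → ℝ := fun θ => phi N o p (x₂ (τ₂ θ)) (y₂ (τ₂ θ)) with hφ₂
  have hdiff : ∀ θ, Real.sin θ ^ 2 * φ₁ θ / (1 + Real.sin θ * Real.cos θ * φ₁ θ) -
      Real.sin θ ^ 2 * φ₂ θ / (1 + Real.sin θ * Real.cos θ * φ₂ θ) =
      Real.sin θ ^ 2 * (φ₁ θ - φ₂ θ) / ((1 + Real.sin θ * Real.cos θ * φ₁ θ) *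
        (1 + Real.sin θ * Real.cos θ * φ₂ θ)) := by
    intro θ
    have e1 : 1 + Real.sin θ * Real.cos θ * φ₁ θ ≠ 0 := (Q₁.pos θ).ne'
    have e2 : 1 + Real.sin θ * Real.cos θ * φ₂ θ ≠ 0 := (Q₂.pos θ).ne'
    rw [div_sub_div _ _ e1 e2]
    congr 1
    ring
  have hw : ∀ θ, HasDerivAt (fun θ => -(R₁ θ - R₂ θ) ^ 2) (-(2 * (R₁ θ - R₂ θ) *
      (Real.sin θ ^ 2 * (φ₁ θ - φ₂ θ) / ((1 + Real.sin θ * Real.cos θ * φ₁ θ) *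
        (1 + Real.sin θ * Real.cos θ * φ₂ θ))))) θ := by
    intro θ
    refine (((Q₁.hR θ).fun_sub (Q₂.hR θ)).fun_pow 2).fun_neg.congr_deriv ?_
    rw [← hdiff]
    simp
    left
    rfl
  have hsign : ∀ θ, 0 ≤ (R₁ θ - R₂ θ) * (φ₁ θ - φ₂ θ) := by
    intro θ
    rcases le_total (R₁ θ) (R₂ θ) with h | h
    · have : φ₁ θ ≤ φ₂ θ := by
        simp only [hφ₁, hφ₂, Q₁.hy, Q₂.hy]
        exact H.phi_mono (hm₂ _) (hm₁ _) (Real.exp_le_exp.2 h) (Real.exp_pos _) (Q₂.hU θ) (Q₁.hU θ)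
      nlinarith
    · have : φ₂ θ ≤ φ₁ θ := by
        simp only [hφ₁, hφ₂, Q₁.hy, Q₂.hy]
        exact H.phi_mono (hm₁ _) (hm₂ _) (Real.exp_le_exp.2 h) (Real.exp_pos _) (Q₁.hU θ) (Q₂.hU θ)
      nlinarith
  have hanti : Antitone (fun θ => -(R₁ θ - R₂ θ) ^ 2) := by
    apply antitone_of_deriv_nonpos
    · exact fun θ => (hw θ).differentiableAt
    · intro θ
      rw [(hw θ).deriv]
      have e1 : 0 < 1 + Real.sin θ * Real.cos θ * φ₁ θ := Q₁.pos θ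
      have e2 : 0 < 1 + Real.sin θ * Real.cos θ * φ₂ θ := Q₂.pos θ
      have e3 : 2 * (R₁ θ - R₂ θ) *
        (Real.sin θ ^ 2 * (φ₁ θ - φ₂ θ) / ((1 + Real.sin θ * Real.cos θ * φ₁ θ) *
        (1 + Real.sin θ * Real.cos θ * φ₂ θ))) = 2 * Real.sin θ ^ 2 *
        ((R₁ θ - R₂ θ) * (φ₁ θ - φ₂ θ)) / ((1 + Real.sin θ * Real.cos θ * φ₁ θ) *
        (1 + Real.sin θ * Real.cos θ * φ₂ θ)) := by ring
      rw [e3]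
      have := hsign θ
      have : 0 ≤ 2 * Real.sin θ ^ 2 *
        ((R₁ θ - R₂ θ) * (φ₁ θ - φ₂ θ)) / ((1 + Real.sin θ * Real.cos θ * φ₁ θ) *
        (1 + Real.sin θ * Real.cos θ * φ₂ θ)) := by positivity
      linarith
  have hper : Function.Periodic (fun θ => -(R₁ θ - R₂ θ) ^ 2) (2 * π * (|n₁| * |n₂| : ℤ)) := by
    have p1 : Function.Periodic R₁ (2 * π * (|n₁| * |n₂| : ℤ)) := by
      rcases abs_choice n₁ with h | h
      · have := Q₁.per.int_mul |n₂|
        have e : 2 * π * ((n₁ * |n₂| : ℤ) : ℝ) = ((|n₂| : ℤ) : ℝ) * (2 * π * n₁) := by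
          push_cast; ring
        rw [h, e]
        exact this
      · have := Q₁.per.int_mul (-|n₂|)
        have e : 2 * π * ((-n₁ * |n₂| : ℤ) : ℝ) = ((-|n₂| : ℤ) : ℝ) * (2 * π * n₁) := by
          push_cast; ring
        rw [h, e]
        exact this
    have p2 : Function.Periodic R₂ (2 * π * (|n₁| * |n₂| : ℤ)) := by
      rcases abs_choice n₂ with h | h
      · have := Q₂.per.int_mul |n₁|
        have e : 2 * π * ((|n₁| * n₂ : ℤ) : ℝ) = ((|n₁| : ℤ) : ℝ) * (2 * π * n₂) := by
          push_cast; ring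
        rw [h, e]
        exact this
      · have := Q₂.per.int_mul (-|n₁|)
        have e : 2 * π * ((|n₁| * -n₂ : ℤ) : ℝ) = ((-|n₁| : ℤ) : ℝ) * (2 * π * n₂) := by
          push_cast; ring
        rw [h, e]
        exact this
    intro θ
    simp only [p1 θ, p2 θ]
  have hpp : 0 < 2 * π * ((|n₁| * |n₂| : ℤ) : ℝ) := by
    have h1 := abs_pos.2 Q₁.n0
    have h2 := abs_pos.2 Q₂.n0
    have : (0:ℝ) < ((|n₁| * |n₂| : ℤ) : ℝ) := by exact_mod_cast mul_pos h1 h2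
    have := Real.pi_pos
    positivity
  have hc := anti_per hpp hanti hper
  by_contra hne
  refine no_flat H hm₁ Q₁ fun η hs hcos k hk => ?_
  have hRne : R₁ η ≠ R₂ η := by
    intro h
    have := hc η θ
    simp only [h, sub_self] at this
    have h2 : (R₁ θ - R₂ θ) ^ 2 = 0 := by linarith
    exact hne (sub_eq_zero.1 (pow_eq_zero_iff two_ne_zero |>.1 h2))
  have hz := (hw η).unique ((hasDerivAt_const η _).congr_of_eventuallyEq
    (Eventually.of_forall fun s => hc s η))
  have e1 : 1 + Real.sin η * Real.cos η * φ₁ η ≠ 0 := (Q₁.pos η).ne'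
  have e2 : 1 + Real.sin η * Real.cos η * φ₂ η ≠ 0 := (Q₂.pos η).ne'
  have hR0 : R₁ η - R₂ η ≠ 0 := sub_ne_zero.2 hRne
  have hφ : φ₁ η - φ₂ η = 0 := by
    simpa [e1, e2, hR0, hs] using hz
  refine H.phi_eq (hm₁ _) (hm₂ _) (fun h => hRne (Real.exp_injective h)) (Real.exp_pos _)
    (Real.exp_pos _) (Q₁.hU η) (Q₂.hU η) hs hcos ?_ hk
  have h : φ₂ η = φ₁ η := by linarith
  simp only [hφ₁, hφ₂, Q₁.hy, Q₂.hy] at h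
  exact h

theorem orb_of_cycle {γ : ℝ → ℝ × ℝ} {T : ℝ} (hγ : IsCycle (gOddVF g N o) γ T)
    (hr : range γ ⊆ Ioo a b ×ˢ (univ : Set ℝ)) :
    Orb a b g N o (fun t => (γ t).1) (fun t => (γ t).2) T := by
  obtain ⟨h1, h2, h3, h4⟩ := hγ
  have hx : ∀ t, HasDerivAt (fun t => (γ t).1) ((γ t).2) t := fun t =>
    (ContinuousLinearMap.fst ℝ ℝ ℝ).hasFDerivAt.comp_hasDerivAt t (h1 t)
  refine ⟨fun t => (hr ⟨t, rfl⟩).1, hx, fun t =>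
    (ContinuousLinearMap.snd ℝ ℝ ℝ).hasFDerivAt.comp_hasDerivAt t (h1 t), h2,
    fun t => by simp only [h3 t], fun t => by simp only [h3 t], ?_⟩
  by_contra! hc
  have hy : ∀ t, (γ t).2 = 0 := fun t =>
    (hx t).unique ((hasDerivAt_const t (0:ℝ)).congr_of_eventuallyEq (Eventually.of_forall hc))
  obtain ⟨t₁, t₂, h⟩ := h4
  exact h (Prod.ext (by rw [hc, hc]) (by rw [hy, hy]))

theorem range_sub {γ₁ γ₂ : ℝ → ℝ × ℝ} {T₁ T₂ : ℝ} (H : Good a b g N o U p A' g' o')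
    (h1 : IsCycle (gOddVF g N o) γ₁ T₁) (hr1 : range γ₁ ⊆ Ioo a b ×ˢ (univ : Set ℝ))
    (h2 : IsCycle (gOddVF g N o) γ₂ T₂) (hr2 : range γ₂ ⊆ Ioo a b ×ˢ (univ : Set ℝ)) :
    range γ₁ ⊆ range γ₂ := by
  have O1 := orb_of_cycle h1 hr1
  have O2 := orb_of_cycle h2 hr2
  obtain ⟨R₁, τ₁, n₁, Q₁⟩ := pol_exists H O1
  obtain ⟨R₂, τ₂, n₂, Q₂⟩ := pol_exists H O2
  rintro _ ⟨t, rfl⟩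
  obtain ⟨θ, rfl⟩ := Q₁.surj t
  refine ⟨τ₂ θ, ?_⟩
  have hR := radial_eq H O1.mem Q₁ O2.mem Q₂ θ
  refine Prod.ext ?_ ?_
  · apply H.Umono.injOn (O2.mem _) (O1.mem _)
    exact (Q₂.hU θ).trans ((by rw [hR] : Real.exp (R₂ θ) * Real.cos θ =
      Real.exp (R₁ θ) * Real.cos θ).trans (Q₁.hU θ).symm)
  · exact (Q₂.hy θ).trans ((by rw [hR] : Real.exp (R₂ θ) * Real.sin θ =
      Real.exp (R₁ θ) * Real.sin θ).trans (Q₁.hy θ).symm)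

end Good
/-- for `g(x) = x + o(x)` with `x g(x) > 0` for `x ≠ 0`, if every
odd coefficient satisfies condition (H_g^{2k+1}), and there is a sequence
`x_m → 0` along which some (H_g^{2k+1}) is strict, then the system
ẋ = y, ẏ = −g(x) − Σ_k f_{2k+1}(x) y^{2k+1} has at most one limit cycle in
`(a,b) × ℝ`, which is hyperbolic. -/
theorem statement12 (a b : ℝ) (ha : a < 0) (hb : 0 < b)
    (g : ℝ → ℝ) (hg : ContDiffOn ℝ 1 g (Ioo a b))
    (hglin : Asymptotics.IsLittleO (𝓝 (0:ℝ)) (fun x => g x - x) (fun x : ℝ => x))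
    (hgsign : ∀ x ∈ Ioo a b, x ≠ 0 → 0 < x * g x)
    (N : ℕ) (o : ℕ → ℝ → ℝ)
    (ho : ∀ k ∈ Finset.range (N + 1), ContDiffOn ℝ 1 (o k) (Ioo a b))
    (hHg : ∀ k ∈ Finset.range (N + 1), ∀ x ∈ Ioo a b, x ≠ 0 →
      0 ≤ HgLHS g k (o k) x)
    (hseq : ∃ xs : ℕ → ℝ, (∀ m, xs m ∈ Ioo a b) ∧ Tendsto xs atTop (𝓝 0) ∧
      ∀ m, ∃ k ∈ Finset.range (N + 1), HgLHS g k (o k) (xs m) ≠ 0) :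
    (∀ (γ₁ : ℝ → ℝ × ℝ) (T₁ : ℝ) (γ₂ : ℝ → ℝ × ℝ) (T₂ : ℝ),
        IsLimitCycle (gOddVF g N o) γ₁ T₁ →
        range γ₁ ⊆ Ioo a b ×ˢ (univ : Set ℝ) →
        IsLimitCycle (gOddVF g N o) γ₂ T₂ →
        range γ₂ ⊆ Ioo a b ×ˢ (univ : Set ℝ) →
        range γ₁ = range γ₂) ∧
    (∀ (μ : ℝ → ℝ × ℝ) (T : ℝ),
        IsLimitCycle (gOddVF g N o) μ T →
        range μ ⊆ Ioo a b ×ˢ (univ : Set ℝ) →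
        (∫ t in (0:ℝ)..T, gOddDiv N o (μ t)) ≠ 0) := by
  obtain ⟨U, p, A', g', o', H⟩ := good_exists a b ha hb g hg hglin hgsign N o ho hHg hseq
  refine ⟨fun γ₁ T₁ γ₂ T₂ h1 hr1 h2 hr2 => ?_, fun μ T h hr h0 => ?_⟩
  · exact (H.range_sub h1.1 hr1 h2.1 hr2).antisymm (H.range_sub h2.1 hr2 h1.1 hr1)
  · have O := Good.orb_of_cycle h.1 hr
    obtain ⟨R, τ, n, Q⟩ := H.pol_exists O
    refine H.no_flat O.mem Q fun θ hs hc k hk => ?_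
    refine H.hyp_aux O h0 (τ θ) ?_ hk
    rw [Q.hy]
    exact mul_ne_zero (Real.exp_pos _).ne' hs
end
end

section
/- Let g ∈ C¹((a,b), ℝ) with a < 0 < b, x·g(x) > 0 for x ≠ 0, and ∫₀^a g(x) dx = ∫₀^b g(x) dx = +∞, and let Φ : (a,b) × ℝ → ℝ be continuously differentiable. Set G(x) = ∫₀^x g(s) ds, E(x,y) = G(x) + y²/2, and for r > 0, Δ_r = {(x,y) ∈ (a,b) × ℝ : 2·E(x,y) < r²}. Suppose there exists M > 0 such that Φ(x,y) ≥ 0 for all (x,y) ∈ ((a,b) × ℝ) \ Δ_M, and the set {Φ = 0} \ Δ_M does not contain any non-trivial positive semi-orbit of the system (S_g): ẋ = y, ẏ = −g(x) − y·Φ(x,y). Then every forward-complete solution of (S_g) definitely enters the set Δ_M and remains inside it: for every solution γ defined on [t₀,∞) there exists T ≥ t₀ with γ(t) ∈ Δ_M for all t ≥ T. -/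
open Set Filter Metric Real Topology intervalIntegral

noncomputable section

/-- The vector field of system (S_g): ẋ = y, ẏ = −g(x) − y·Φ(x,y). -/
def gVF (g : ℝ → ℝ) (Φ : ℝ × ℝ → ℝ) : ℝ × ℝ → ℝ × ℝ :=
  fun p => (p.2, -g p.1 - p.2 * Φ p)

/-- The auxiliary function
`Ψ(x,y) = (σ(x)√(2G(x))/g(x))·[2G(x)(Φ_x g − Φ g')/g² + Φ] + y Φ_y`. -/
def Psi (g : ℝ → ℝ) (Φ : ℝ × ℝ → ℝ) (p : ℝ × ℝ) : ℝ :=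
  Real.sign p.1 * Real.sqrt (2 * Gfun g p.1) / g p.1 *
      (2 * Gfun g p.1 *
          (fderiv ℝ Φ p (1, 0) * g p.1 - Φ p * deriv g p.1) / (g p.1) ^ 2
        + Φ p)
    + p.2 * fderiv ℝ Φ p (0, 1)

/-- The sublevel region `Δ_r = {(x,y) ∈ (a,b) × ℝ : 2E(x,y) < r²}` where
`E(x,y) = G(x) + y²/2`. -/
def Delta (a b : ℝ) (g : ℝ → ℝ) (r : ℝ) : Set (ℝ × ℝ) :=
  {p : ℝ × ℝ | p.1 ∈ Ioo a b ∧ 2 * (Gfun g p.1 + p.2 ^ 2 / 2) < r ^ 2}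

lemma aux_limit (K : Set (ℝ × ℝ)) (hK : IsCompact K) (F : ℝ × ℝ → ℝ × ℝ) (hF : ContinuousOn F K)
    (γ : ℝ → ℝ × ℝ) (t₀ : ℝ) (hγ : ∀ t ≥ t₀, HasDerivAt γ (F (γ t)) t) (hγK : ∀ t ≥ t₀, γ t ∈ K) :
    ∃ η : ℝ → ℝ × ℝ, (∀ s, η s ∈ K) ∧ (∀ s, HasDerivAt η (F (η s)) s) ∧
      ∀ f : ℝ × ℝ → ℝ, ContinuousOn f K → ∀ l, Tendsto (fun t => f (γ t)) atTop (𝓝 l) →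
        ∀ s, f (η s) = l := by
  let U : Ultrafilter ℝ := Ultrafilter.of atTop
  have hU : (U : Filter ℝ) ≤ atTop := Ultrafilter.of_le atTop
  have hev : ∀ s c : ℝ, ∀ᶠ t in (U : Filter ℝ), c ≤ t + s := by
    intro s c
    apply hU
    filter_upwards [eventually_ge_atTop (c - s)] with t ht
    linarith
  have hlim : ∀ s : ℝ, ∃ p ∈ K, Tendsto (fun t => γ (t + s)) (U : Filter ℝ) (𝓝 p) := by
    intro s
    have h1 : ((U.map (fun t => γ (t + s)) : Ultrafilter (ℝ × ℝ)) : Filter (ℝ × ℝ)) ≤ 𝓟 K := by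
      rw [le_principal_iff]
      change ∀ᶠ t in (U : Filter ℝ), γ (t + s) ∈ K
      filter_upwards [hev s t₀] with t ht using hγK _ ht
    obtain ⟨p, hp, hp'⟩ := hK.ultrafilter_le_nhds _ h1
    exact ⟨p, hp, hp'⟩
  choose η hηK hη using hlim
  have hηW : ∀ s, Tendsto (fun t => γ (t + s)) (U : Filter ℝ) (𝓝[K] (η s)) := by
    intro s
    refine tendsto_nhdsWithin_iff.2 ⟨hη s, ?_⟩
    filter_upwards [hev s t₀] with t ht using hγK _ ht
  refine ⟨η, hηK, ?_, ?_⟩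
  · intro s
    obtain ⟨L, hL⟩ := hK.exists_bound_of_continuousOn hF
    have hLip : ∀ u ≥ t₀, ∀ v ≥ t₀, ‖γ v - γ u‖ ≤ L * ‖v - u‖ := by
      intro u hu v hv
      exact (convex_Ici t₀).norm_image_sub_le_of_norm_hasDerivWithin_le
        (fun x hx => (hγ x hx).hasDerivWithinAt) (fun x hx => hL _ (hγK x hx)) hu hv
    have huc := hK.uniformContinuousOn_of_continuous hF
    rw [Metric.uniformContinuousOn_iff] at huc
    rw [hasDerivAt_iff_isLittleO, Asymptotics.isLittleO_iff]
    intro ε hε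
    obtain ⟨δ, hδ, hd⟩ := huc ε hε
    have hL0 : 0 ≤ L := (norm_nonneg _).trans (hL _ (hηK 0))
    have hLδ : 0 < δ / (L + 1) := by positivity
    filter_upwards [Metric.ball_mem_nhds s hLδ] with s' hs'
    have key : ∀ᶠ t in (U : Filter ℝ),
        ‖γ (t + s') - γ (t + s) - (s' - s) • F (γ (t + s))‖ ≤ ε * ‖s' - s‖ := by
      filter_upwards [hev s t₀, hev s' t₀] with t h1 h2
      have hsub : ∀ x ∈ uIcc (t + s) (t + s'), t₀ ≤ x := by
        intro x hx
        exact (le_min h1 h2).trans hx.1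
      have hA := (convex_uIcc (t + s) (t + s')).norm_image_sub_le_of_norm_hasDerivWithin_le
        (f := fun u => γ u - u • F (γ (t + s))) (f' := fun u => F (γ u) - (1:ℝ) • F (γ (t + s)))
        (C := ε) (x := t + s) (y := t + s')
        (fun x hx => ((hγ x (hsub x hx)).sub
          ((hasDerivAt_id x).smul_const (F (γ (t + s))))).hasDerivWithinAt) ?_
        left_mem_uIcc right_mem_uIcc
      · have e1 : γ (t + s') - (t + s') • F (γ (t + s)) - (γ (t + s) - (t + s) • F (γ (t + s)))
            = γ (t + s') - γ (t + s) - (s' - s) • F (γ (t + s)) := by module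
        have e2 : t + s' - (t + s) = s' - s := by ring
        simpa only [e1, e2] using hA
      · intro x hx
        rw [one_smul, ← dist_eq_norm]
        refine (hd _ (hγK _ (hsub x hx)) _ (hγK _ h1) ?_).le
        rw [dist_eq_norm]
        refine (hLip _ h1 _ (hsub x hx)).trans_lt ?_
        have h3 : ‖x - (t + s)‖ ≤ ‖s' - s‖ := by
          have := abs_sub_left_of_mem_uIcc hx
          simpa [Real.norm_eq_abs] using this
        have h4 : ‖s' - s‖ < δ / (L + 1) := by
          rw [← dist_eq_norm]; exact hs'
        rw [lt_div_iff₀ (by positivity)] at h4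
        nlinarith [norm_nonneg (s' - s)]
    have hFt : Tendsto (fun t => F (γ (t + s))) (U : Filter ℝ) (𝓝 (F (η s))) :=
      (hF _ (hηK s)).tendsto.comp (hηW s)
    exact le_of_tendsto (((hη s').sub (hη s)).sub (hFt.const_smul (s' - s))).norm key
  · intro f hf l hl s
    have h1 : Tendsto (fun t => f (γ (t + s))) (U : Filter ℝ) (𝓝 (f (η s))) :=
      (hf _ (hηK s)).tendsto.comp (hηW s)
    have h2 : Tendsto (fun t => f (γ (t + s))) (U : Filter ℝ) (𝓝 l) :=
      hl.comp ((tendsto_atTop_add_const_right _ s tendsto_id).mono_left hU)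
    exact tendsto_nhds_unique h1 h2

lemma aux_G (a b : ℝ) (ha : a < 0) (hb : 0 < b) (g : ℝ → ℝ) (hg : ContinuousOn g (Ioo a b))
    (x : ℝ) (hx : x ∈ Ioo a b) : HasDerivAt (Gfun g) (g x) x := by
  have hsub : uIcc 0 x ⊆ Ioo a b := by
    intro z hz
    exact ⟨lt_of_lt_of_le (lt_min ha hx.1) hz.1, lt_of_le_of_lt hz.2 (max_lt hb hx.2)⟩
  exact integral_hasDerivAt_right ((hg.mono hsub).intervalIntegrable)
    (hg.stronglyMeasurableAtFilter isOpen_Ioo x hx) (hg.continuousAt (isOpen_Ioo.mem_nhds hx))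

lemma aux_bd (a b : ℝ) (g : ℝ → ℝ) (hG : ContinuousOn (Gfun g) (Ioo a b))
    (hab : a < b)
    (hGa : Tendsto (Gfun g) (𝓝[>] a) atTop)
    (hGb : Tendsto (Gfun g) (𝓝[<] b) atTop) (c : ℝ) :
    ∃ α β R, Icc α β ⊆ Ioo a b ∧ 0 ≤ R ∧ ∀ x y, x ∈ Ioo a b → Gfun g x + y ^ 2 / 2 ≤ c →
      x ∈ Icc α β ∧ y ∈ Icc (-R) R := by
  obtain ⟨α, hα, h1⟩ := (mem_nhdsGT_iff_exists_Ioo_subset' hab).1 (hGa.eventually_gt_atTop c)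
  obtain ⟨β, hβ, h2⟩ := (mem_nhdsLT_iff_exists_Ioo_subset' hab).1 (hGb.eventually_gt_atTop c)
  have hsub : Icc α β ⊆ Ioo a b := fun x hx => ⟨lt_of_lt_of_le hα hx.1, lt_of_le_of_lt hx.2 hβ⟩
  obtain ⟨B, hB⟩ := isCompact_Icc.exists_bound_of_continuousOn (hG.mono hsub)
  refine ⟨α, β, 2 * |c| + 2 * |B| + 1, hsub, by positivity, ?_⟩
  intro x y hx hE
  have hx' : x ∈ Icc α β := by
    constructor
    · by_contra! h
      have : c < Gfun g x := h1 ⟨hx.1, h⟩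
      nlinarith [sq_nonneg y]
    · by_contra! h
      have : c < Gfun g x := h2 ⟨h, hx.2⟩
      nlinarith [sq_nonneg y]
  refine ⟨hx', abs_le.1 ?_⟩
  have h3 := (abs_le.1 (hB x hx')).1
  have h4 : y ^ 2 ≤ 2 * |c| + 2 * |B| := by
    linarith [le_abs_self c, le_abs_self B]
  have h5 : |y| ^ 2 ≤ 2 * |c| + 2 * |B| := by rwa [sq_abs]
  nlinarith [abs_nonneg y, abs_nonneg c, abs_nonneg B, sq_nonneg (|y| - 1)]
 
lemma aux_E (a b : ℝ) (ha : a < 0) (hb : 0 < b) (g : ℝ → ℝ) (hg : ContinuousOn g (Ioo a b))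
    (Φ : ℝ × ℝ → ℝ) (γ : ℝ → ℝ × ℝ) (t : ℝ) (h : HasDerivAt γ (gVF g Φ (γ t)) t)
    (hx : (γ t).1 ∈ Ioo a b) :
    HasDerivAt (fun t => Gfun g (γ t).1 + (γ t).2 ^ 2 / 2) (-((γ t).2 ^ 2 * Φ (γ t))) t := by
  have h1 : HasDerivAt (fun t => (γ t).1) (γ t).2 t := h.fst
  have h2 : HasDerivAt (fun t => (γ t).2) (-g (γ t).1 - (γ t).2 * Φ (γ t)) t := h.snd
  have h3 := (aux_G a b ha hb g hg _ hx).comp t h1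
  have h4 := h3.add ((h2.pow 2).div_const 2)
  refine h4.congr_deriv ?_
  simp
  ring

/-- if `G → +∞` at both endpoints of `(a,b)`, `Φ ≥ 0` outside
`Δ_M`, and `{Φ = 0} \ Δ_M` contains no non-trivial positive semi-orbit of
(S_g), then every forward-complete solution of (S_g) in the strip definitely
enters `Δ_M` and remains inside it. -/
theorem statement13 (a b : ℝ) (ha : a < 0) (hb : 0 < b)
    (g : ℝ → ℝ) (hg : ContDiffOn ℝ 1 g (Ioo a b))
    (hgsign : ∀ x ∈ Ioo a b, x ≠ 0 → 0 < x * g x)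
    (hGa : Tendsto (Gfun g) (𝓝[>] a) atTop)
    (hGb : Tendsto (Gfun g) (𝓝[<] b) atTop)
    (Φ : ℝ × ℝ → ℝ) (hΦ : ContDiffOn ℝ 1 Φ (Ioo a b ×ˢ (univ : Set ℝ)))
    (M : ℝ) (hM : 0 < M)
    (hpos : ∀ p ∈ (Ioo a b ×ˢ (univ : Set ℝ)) \ Delta a b g M, Φ p ≥ 0)
    (hZ : ¬ HasSemiOrbitIn (gVF g Φ)
      ({p ∈ Ioo a b ×ˢ (univ : Set ℝ) | Φ p = 0} \ Delta a b g M)) :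
    ∀ (γ : ℝ → ℝ × ℝ) (t₀ : ℝ), IsSolOn (gVF g Φ) γ (Ici t₀) →
      γ '' Ici t₀ ⊆ Ioo a b ×ˢ (univ : Set ℝ) →
      ∃ T ≥ t₀, ∀ t ≥ T, γ t ∈ Delta a b g M := by
  intro γ t₀ hsol hstrip
  have hgc := hg.continuousOn
  have hΦc := hΦ.continuousOn
  have hx : ∀ t ≥ t₀, (γ t).1 ∈ Ioo a b := fun t ht => (hstrip ⟨t, ht, rfl⟩).1
  have hGc : ContinuousOn (Gfun g) (Ioo a b) := fun x hx =>
    (aux_G a b ha hb g hgc x hx).continuousAt.continuousWithinAt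
  have hE : ∀ t ≥ t₀, HasDerivAt (fun t => Gfun g (γ t).1 + (γ t).2 ^ 2 / 2)
      (-((γ t).2 ^ 2 * Φ (γ t))) t := fun t ht =>
    aux_E a b ha hb g hgc Φ γ t (hsol t ht) (hx t ht)
  set e : ℝ → ℝ := fun t => Gfun g (γ t).1 + (γ t).2 ^ 2 / 2 with he
  have hec : ContinuousOn e (Ici t₀) := fun t ht => (hE t ht).continuousAt.continuousWithinAt
  by_cases hcase : ∃ t₁ ≥ t₀, γ t₁ ∈ Delta a b g M
  · obtain ⟨t₁, ht₁, hin⟩ := hcase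
    refine ⟨t₁, ht₁, ?_⟩
    obtain ⟨α, β, R, hαβ, hR, hbd⟩ := aux_bd a b g hGc (ha.trans hb) hGa hGb (M ^ 2 / 2)
    have hrect : Icc α β ×ˢ Icc (-R) R ⊆ Ioo a b ×ˢ (univ : Set ℝ) :=
      prod_mono hαβ (subset_univ _)
    obtain ⟨L, hL⟩ := (hΦ.mono hrect).exists_lipschitzOnWith one_ne_zero
      ((convex_Icc α β).prod (convex_Icc (-R) R)) (isCompact_Icc.prod isCompact_Icc)
    -- pointwise estimate
    have hpt : ∀ x y, x ∈ Ioo a b → Gfun g x + y ^ 2 / 2 < M ^ 2 / 2 →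
        -(2 * L * R) * (M ^ 2 / 2 - (Gfun g x + y ^ 2 / 2)) ≤ y ^ 2 * Φ (x, y) := by
      intro x y hxx hlt
      set d := M ^ 2 / 2 - (Gfun g x + y ^ 2 / 2) with hd
      have hd0 : 0 < d := by rw [hd]; linarith
      have hLR : (0:ℝ) ≤ L := L.2
      obtain ⟨z, hz, hzy⟩ : ∃ z : ℝ, z ^ 2 = y ^ 2 + 2 * d ∧ |z - y| * |y| ≤ 2 * d := by
        have hs : √(y ^ 2 + 2 * d) ^ 2 = y ^ 2 + 2 * d := Real.sq_sqrt (by positivity)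
        have hs0 := Real.sqrt_nonneg (y ^ 2 + 2 * d)
        have hsy : |y| ≤ √(y ^ 2 + 2 * d) := by
          apply Real.abs_le_sqrt; linarith
        rcases le_total 0 y with hy | hy
        · refine ⟨√(y ^ 2 + 2 * d), hs, ?_⟩
          rw [abs_of_nonneg hy] at *
          rw [abs_of_nonneg (by linarith)]
          nlinarith
        · refine ⟨-√(y ^ 2 + 2 * d), by rw [neg_sq, hs], ?_⟩
          rw [abs_of_nonpos hy] at *
          rw [abs_of_nonpos (by linarith)]
          nlinarith
      have hzE : Gfun g x + z ^ 2 / 2 = M ^ 2 / 2 := by rw [hz, hd]; ring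
      have m1 := hbd x y hxx hlt.le
      have m2 := hbd x z hxx hzE.le
      have hΦz : 0 ≤ Φ (x, z) := by
        apply hpos
        refine ⟨⟨hxx, mem_univ _⟩, ?_⟩
        intro hmem
        have := hmem.2
        simp only at this
        linarith
      have hdist := hL.dist_le_mul (x, z) ⟨m2.1, m2.2⟩ (x, y) ⟨m1.1, m1.2⟩
      rw [Real.dist_eq, Prod.dist_eq] at hdist
      simp only [dist_self, Real.dist_eq] at hdist
      rw [max_eq_right (abs_nonneg _)] at hdist
      have h5 : -(L * |z - y|) ≤ Φ (x, y) := by linarith [(abs_le.1 hdist).2]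
      have hyR : |y| ≤ R := abs_le.2 m1.2
      calc -(2 * L * R) * d = -(L * R * (2 * d)) := by ring
        _ ≤ -(L * |y| * (|z - y| * |y|)) := by
            apply neg_le_neg
            gcongr
        _ = y ^ 2 * (-(L * |z - y|)) := by rw [← sq_abs y]; ring
        _ ≤ y ^ 2 * Φ (x, y) := by gcongr
    set C : ℝ := 2 * L * R with hC
    have hin' : e t₁ < M ^ 2 / 2 := by
      have := hin.2
      simp only [he]; linarith
    have hall : ∀ t ≥ t₁, e t < M ^ 2 / 2 := by
      by_contra! hcon
      obtain ⟨t₂, ht₂, hbad⟩ := hcon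
      have hsub : Icc t₁ t₂ ⊆ Ici t₀ := fun t ht => ht₁.le.trans ht.1
      have hcpt : IsCompact (Icc t₁ t₂ ∩ e ⁻¹' Ici (M ^ 2 / 2)) :=
        isCompact_Icc.of_isClosed_subset
          ((hec.mono hsub).preimage_isClosed_of_isClosed isClosed_Icc isClosed_Ici)
          inter_subset_left
      obtain ⟨τ, ⟨hτ, hτe⟩, hleast⟩ := hcpt.exists_isLeast ⟨t₂, ⟨ht₂, le_rfl⟩, hbad⟩
      have hlt : ∀ t ∈ Ico t₁ τ, e t < M ^ 2 / 2 := by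
        intro t ht
        by_contra! h
        exact absurd (hleast ⟨⟨ht.1, ht.2.le.trans hτ.2⟩, h⟩) (not_le.2 ht.2)
      have hw : ∀ t ≥ t₀, HasDerivAt (fun t => (M ^ 2 / 2 - e t) * Real.exp (C * t))
          (-(-((γ t).2 ^ 2 * Φ (γ t))) * Real.exp (C * t)
            + (M ^ 2 / 2 - e t) * (Real.exp (C * t) * (C * 1))) t := by
        intro t ht
        exact ((hE t ht).const_sub _).mul (((hasDerivAt_id t).const_mul C).exp)
      have hmono : MonotoneOn (fun t => (M ^ 2 / 2 - e t) * Real.exp (C * t)) (Icc t₁ τ) := by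
        have hge : ∀ t ∈ Icc t₁ τ, t ≥ t₀ := fun t ht => ht₁.le.trans ht.1
        refine monotoneOn_of_deriv_nonneg (convex_Icc _ _)
          (fun t ht => (hw t (hge t ht)).continuousAt.continuousWithinAt) ?_ ?_
        · intro t ht
          exact (hw t (hge t (interior_subset ht))).differentiableAt.differentiableWithinAt
        · intro t ht
          have ht' := interior_subset ht
          rw [interior_Icc] at ht
          rw [(hw t (hge t ht')).deriv]
          have h6 := hpt (γ t).1 (γ t).2 (hx t (hge t ht')) (hlt t ⟨ht'.1, ht.2⟩)
          change -C * (M ^ 2 / 2 - e t) ≤ (γ t).2 ^ 2 * Φ (γ t) at h6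
          have h7 : 0 ≤ ((γ t).2 ^ 2 * Φ (γ t) + C * (M ^ 2 / 2 - e t)) * Real.exp (C * t) :=
            mul_nonneg (by linarith) (Real.exp_pos _).le
          linarith
      have h8 := hmono ⟨le_rfl, hτ.1⟩ ⟨hτ.1, le_rfl⟩ hτ.1
      simp only at h8
      have h9 : 0 < (M ^ 2 / 2 - e t₁) * Real.exp (C * t₁) :=
        mul_pos (by linarith) (Real.exp_pos _)
      have h10 : (M ^ 2 / 2 - e τ) * Real.exp (C * τ) ≤ 0 :=
        mul_nonpos_of_nonpos_of_nonneg (by have : M ^ 2 / 2 ≤ e τ := hτe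
                                           linarith) (Real.exp_pos _).le
      linarith
    intro t ht
    refine ⟨hx t (ht₁.le.trans ht), ?_⟩
    have := hall t ht
    simp only [he] at this
    linarith
  · exfalso
    push Not at hcase
    have hge : ∀ t ≥ t₀, M ^ 2 / 2 ≤ e t := by
      intro t ht
      by_contra! h
      refine hcase t ht ⟨hx t ht, ?_⟩
      simp only [he] at h
      linarith
    have hanti : AntitoneOn e (Ici t₀) := by
      refine antitoneOn_of_deriv_nonpos (convex_Ici _) hec
        (fun t ht => (hE t (interior_subset ht)).differentiableAt.differentiableWithinAt) ?_
      intro t ht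
      have ht' := interior_subset ht
      rw [(hE t ht').deriv]
      have := hpos (γ t) ⟨⟨hx t ht', mem_univ _⟩, hcase t ht'⟩
      have : 0 ≤ (γ t).2 ^ 2 * Φ (γ t) := mul_nonneg (sq_nonneg _) this
      linarith
    obtain ⟨l, hl⟩ : ∃ l, Tendsto e atTop (𝓝 l) := by
      have hA : Antitone (fun t => e (max t t₀)) := by
        intro s t hst
        exact hanti (mem_Ici.2 (le_max_right _ _)) (mem_Ici.2 (le_max_right _ _)) (max_le_max_right _ hst)
      have hB : BddBelow (range fun t => e (max t t₀)) := by
        refine ⟨M ^ 2 / 2, ?_⟩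
        rintro _ ⟨t, rfl⟩
        exact hge _ (le_max_right _ _)
      refine ⟨_, (tendsto_atTop_ciInf hA hB).congr' ?_⟩
      filter_upwards [eventually_ge_atTop t₀] with t ht
      rw [max_eq_left ht]
    have hlM : M ^ 2 / 2 ≤ l := by
      refine ge_of_tendsto hl ?_
      filter_upwards [eventually_ge_atTop t₀] with t ht using hge t ht
    obtain ⟨α, β, R, hαβ, hR, hbd⟩ := aux_bd a b g hGc (ha.trans hb) hGa hGb (e t₀)
    have hrect : Icc α β ×ˢ Icc (-R) R ⊆ Ioo a b ×ˢ (univ : Set ℝ) :=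
      prod_mono hαβ (subset_univ _)
    have hmaps : MapsTo (Prod.fst : ℝ × ℝ → ℝ) (Ioo a b ×ˢ (univ : Set ℝ)) (Ioo a b) :=
      fun p hp => hp.1
    have hFc : ContinuousOn (gVF g Φ) (Ioo a b ×ˢ (univ : Set ℝ)) := by
      refine continuous_snd.continuousOn.prodMk ?_
      exact (hgc.comp continuous_fst.continuousOn hmaps).neg.sub
        (continuous_snd.continuousOn.mul hΦc)
    have hEc : ContinuousOn (fun p : ℝ × ℝ => Gfun g p.1 + p.2 ^ 2 / 2)
        (Ioo a b ×ˢ (univ : Set ℝ)) := by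
      refine (hGc.comp continuous_fst.continuousOn hmaps).add ?_
      fun_prop
    obtain ⟨η, hηK, hη, hηlim⟩ := aux_limit (Icc α β ×ˢ Icc (-R) R)
      (isCompact_Icc.prod isCompact_Icc) (gVF g Φ) (hFc.mono hrect) γ t₀ hsol (fun t ht => by
        have := hbd (γ t).1 (γ t).2 (hx t ht) (hanti (le_refl t₀) ht ht)
        exact ⟨this.1, this.2⟩)
    have hηE : ∀ s, Gfun g (η s).1 + (η s).2 ^ 2 / 2 = l := hηlim _ (hEc.mono hrect) l hl
    have hηs : ∀ s, η s ∈ Ioo a b ×ˢ (univ : Set ℝ) := fun s => hrect (hηK s)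
    have hprod : ∀ s, (η s).2 ^ 2 * Φ (η s) = 0 := by
      intro s
      have h1 := aux_E a b ha hb g hgc Φ η s (hη s) (hηs s).1
      have h2 : HasDerivAt (fun t => Gfun g (η t).1 + (η t).2 ^ 2 / 2) 0 s := by
        simp only [hηE]
        exact hasDerivAt_const s l
      linarith [h1.unique h2]
    have hgne : ∀ s, (η s).2 = 0 → g (η s).1 ≠ 0 := by
      intro s hs hg0
      by_cases hx0 : (η s).1 = 0
      · have := hηE s
        rw [hs, hx0] at this
        simp [Gfun] at this
        have : 0 < M ^ 2 := by positivity
        linarith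
      · have := hgsign _ (hηs s).1 hx0
        rw [hg0] at this
        simp at this
    have hΦ0 : ∀ s, Φ (η s) = 0 := by
      intro s
      by_cases hy : (η s).2 = 0
      · have h2 : HasDerivAt (fun t => (η t).2) (-g (η s).1 - (η s).2 * Φ (η s)) s := (hη s).snd
        rw [hy] at h2
        have h3 : ∀ᶠ t in 𝓝[≠] s, (η t).2 ≠ 0 :=
          h2.eventually_ne (by simpa using hgne s hy)
        have h4 : Tendsto (fun t => Φ (η t)) (𝓝[≠] s) (𝓝 (Φ (η s))) := by
          have hca : ContinuousAt Φ (η s) :=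
            hΦc.continuousAt ((isOpen_Ioo.prod isOpen_univ).mem_nhds (hηs s))
          exact (hca.comp (f := η) (hη s).continuousAt).tendsto.mono_left nhdsWithin_le_nhds
        refine tendsto_nhds_unique h4 (tendsto_const_nhds.congr' ?_)
        filter_upwards [h3] with t ht
        rcases mul_eq_zero.1 (hprod t) with h | h
        · exact absurd (pow_eq_zero_iff two_ne_zero |>.1 h) ht
        · exact h.symm
      · rcases mul_eq_zero.1 (hprod s) with h | h
        · exact absurd (pow_eq_zero_iff two_ne_zero |>.1 h) hy
        · exact h
    apply hZ
    refine ⟨η, 0, fun s _ => hη s, ?_, ?_⟩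
    · by_contra! hconst
      have h1 : HasDerivWithinAt η 0 (Ici 0) 0 :=
        (hasDerivWithinAt_const (0:ℝ) (Ici 0) (η 0)).congr
          (fun t ht => hconst t ht 0 self_mem_Ici) rfl
      have h2 := (uniqueDiffOn_Ici (0:ℝ) 0 self_mem_Ici).eq_deriv _
        (hη 0).hasDerivWithinAt h1
      have h3 : (η 0).2 = 0 := congrArg Prod.fst h2
      have h4 : -g (η 0).1 - (η 0).2 * Φ (η 0) = 0 := congrArg Prod.snd h2
      apply hgne 0 h3
      rw [h3] at h4
      linarith
    · rintro _ ⟨s, -, rfl⟩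
      refine ⟨⟨hηs s, hΦ0 s⟩, fun hmem => ?_⟩
      have h1 := hmem.2
      have h2 := hηE s
      linarith
end
end
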